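/- arXiv:2305.03985 — 8 statements merged into one kernel-verified Lean document; each statement's English description precedes it below -/
import Mathlib

section
/- Let S and S' be finite sets of points in ℝ², let 𝒬 be a finite set of unit squares with S ⊆ ⋃𝒬, and let c ≥ 0 be a real number. For each unit-grid cell □ = [i, i+1) × [j, j+1) (i, j ∈ ℤ), set S_□ = S ∩ □ and 𝒬_□ = {Q ∈ 𝒬 : Q ∩ □ ≠ ∅}, and suppose that 𝒬*_□ ⊆ 𝒬_□ is a set cover of S_□ satisfying memb(S', 𝒬*_□) ≤ c · opt(S_□, S', 𝒬_□). Then the union family ⋃_□ 𝒬*_□ is a set cover of S and memb(S', ⋃_□ 𝒬*_□) ≤ 9c · opt(S, S', 𝒬). -/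
open scoped Classical

/-- The number of sets in the finite family `F` containing the point `p`. -/
noncomputable def memb (p : ℝ × ℝ) (F : Finset (Set (ℝ × ℝ))) : ℕ :=
  (F.filter (fun R => p ∈ R)).card

/-- The membership of a finite point set `S'` with respect to a finite family `F`. -/
noncomputable def membS (S' : Finset (ℝ × ℝ)) (F : Finset (Set (ℝ × ℝ))) : ℕ :=
  S'.sup (fun p => memb p F)

/-- `F` is a set cover of `S`. -/
def IsCover (S : Finset (ℝ × ℝ)) (F : Finset (Set (ℝ × ℝ))) : Prop :=
  ∀ p ∈ S, ∃ R ∈ F, p ∈ R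

/-- The minimum membership of `S'` over all set covers of `S` chosen from `F`. -/
noncomputable def optMemb (S S' : Finset (ℝ × ℝ)) (F : Finset (Set (ℝ × ℝ))) : ℕ :=
  sInf {m : ℕ | ∃ G ⊆ F, IsCover S G ∧ membS S' G = m}

/-- The closed axis-parallel unit square with bottom-left corner `(a, b)`. -/
def unitSquare (a b : ℝ) : Set (ℝ × ℝ) :=
  {p | a ≤ p.1 ∧ p.1 ≤ a + 1 ∧ b ≤ p.2 ∧ p.2 ≤ b + 1}

/-- The half-open unit grid cell `[i, i+1) × [j, j+1)`. -/
def gridCell (i j : ℤ) : Set (ℝ × ℝ) :=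
  {p | (i : ℝ) ≤ p.1 ∧ p.1 < (i : ℝ) + 1 ∧ (j : ℝ) ≤ p.2 ∧ p.2 < (j : ℝ) + 1}

/-!
A unit square has diameter at most `1` in the sup metric of `ℝ × ℝ`, so the squares containing a
point `p` meet only the nine cells around `p`. Each local cover therefore contributes to the
membership of `p` only for these nine cells, and its contribution is at most `c` times the local
optimum. The local optimum is at most the global one, since the members of an optimal global cover
that meet a cell cover the points in this cell.
-/

section Membership

variable {p : ℝ × ℝ} {S S' : Finset (ℝ × ℝ)} {F G : Finset (Set (ℝ × ℝ))}

theorem memb_mono (p : ℝ × ℝ) : Monotone (memb p) :=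
  fun _ _ h => Finset.card_le_card (Finset.filter_subset_filter _ h)

theorem membS_mono (S' : Finset (ℝ × ℝ)) : Monotone (membS S') :=
  fun _ _ h => Finset.sup_mono_fun fun p _ => memb_mono p h

theorem memb_le_membS (hp : p ∈ S') (F : Finset (Set (ℝ × ℝ))) : memb p F ≤ membS S' F :=
  Finset.le_sup (f := fun p => memb p F) hp

theorem cast_membS_le {x : ℝ} (hx : 0 ≤ x) (h : ∀ p ∈ S', (memb p F : ℝ) ≤ x) :
    (membS S' F : ℝ) ≤ x :=
  (Nat.le_floor_iff hx).1 (Finset.sup_le fun p hp => Nat.le_floor (h p hp))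

theorem memb_le_sum {ι : Type*} {C : ι → Finset (Set (ℝ × ℝ))} {T : Finset ι}
    (h : ∀ R ∈ F, p ∈ R → ∃ t ∈ T, R ∈ C t) : memb p F ≤ ∑ t ∈ T, memb p (C t) := by
  refine (Finset.card_le_card fun R hR => ?_).trans Finset.card_biUnion_le
  obtain ⟨hRF, hpR⟩ := Finset.mem_filter.1 hR
  obtain ⟨t, ht, hRt⟩ := h R hRF hpR
  exact Finset.mem_biUnion.2 ⟨t, ht, Finset.mem_filter.2 ⟨hRt, hpR⟩⟩

theorem IsCover.mono (hF : IsCover S F) (h : F ⊆ G) : IsCover S G := fun p hp =>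
  let ⟨R, hR, hpR⟩ := hF p hp
  ⟨R, h hR, hpR⟩

theorem IsCover.filter_mem (hF : IsCover S F) (A : Set (ℝ × ℝ)) :
    IsCover (S.filter (· ∈ A)) (F.filter fun R => (R ∩ A).Nonempty) := by
  intro p hp
  obtain ⟨hpS, hpA⟩ := Finset.mem_filter.1 hp
  obtain ⟨R, hR, hpR⟩ := hF p hpS
  exact ⟨R, Finset.mem_filter.2 ⟨hR, p, hpR, hpA⟩, hpR⟩

theorem optMemb_le_membS (hGF : G ⊆ F) (hG : IsCover S G) (S' : Finset (ℝ × ℝ)) :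
    optMemb S S' F ≤ membS S' G :=
  Nat.sInf_le ⟨G, hGF, hG, rfl⟩

theorem IsCover.exists_membS_eq_optMemb (hF : IsCover S F) (S' : Finset (ℝ × ℝ)) :
    ∃ G ⊆ F, IsCover S G ∧ membS S' G = optMemb S S' F :=
  Nat.sInf_mem (s := {m | ∃ G ⊆ F, IsCover S G ∧ membS S' G = m}) ⟨_, F, subset_rfl, hF, rfl⟩

theorem IsCover.optMemb_filter_mem_le (hF : IsCover S F) (S' : Finset (ℝ × ℝ))
    (A : Set (ℝ × ℝ)) :
    optMemb (S.filter (· ∈ A)) S' (F.filter fun R => (R ∩ A).Nonempty) ≤ optMemb S S' F := by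
  obtain ⟨G, hGF, hG, hGopt⟩ := hF.exists_membS_eq_optMemb S'
  calc optMemb (S.filter (· ∈ A)) S' (F.filter fun R => (R ∩ A).Nonempty)
      ≤ membS S' (G.filter fun R => (R ∩ A).Nonempty) :=
        optMemb_le_membS (Finset.filter_subset_filter _ hGF) (hG.filter_mem A) S'
    _ ≤ membS S' G := membS_mono S' (Finset.filter_subset _ _)
    _ = optMemb S S' F := hGopt

end Membership

section Localization

variable {ι : Type*} {S S' : Finset (ℝ × ℝ)} {Q U : Finset (Set (ℝ × ℝ))}
  {cell : ι → Set (ℝ × ℝ)} {C : ι → Finset (Set (ℝ × ℝ))}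

theorem isCover_of_isCover_filter_mem (hcell : ∀ p ∈ S, ∃ t, p ∈ cell t)
    (hC : ∀ t, IsCover (S.filter (· ∈ cell t)) (C t)) (hU : ∀ t, C t ⊆ U) : IsCover S U := by
  intro p hp
  obtain ⟨t, ht⟩ := hcell p hp
  exact (hC t).mono (hU t) p (Finset.mem_filter.2 ⟨hp, ht⟩)

theorem membS_le_mul_optMemb_of_cells {c : ℝ} (hc : 0 ≤ c) (hQ : IsCover S Q)
    (hC : ∀ t, (membS S' (C t) : ℝ) ≤
      c * optMemb (S.filter (· ∈ cell t)) S' (Q.filter fun R => (R ∩ cell t).Nonempty))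
    {n : ℕ} (hU : ∀ p ∈ S', ∃ T : Finset ι, T.card ≤ n ∧ ∀ R ∈ U, p ∈ R → ∃ t ∈ T, R ∈ C t) :
    (membS S' U : ℝ) ≤ n * c * optMemb S S' Q := by
  refine cast_membS_le (by positivity) fun p hp => ?_
  obtain ⟨T, hTn, hT⟩ := hU p hp
  have memb_le_local (t : ι) : (memb p (C t) : ℝ) ≤ c * optMemb S S' Q :=
    calc (memb p (C t) : ℝ) ≤ membS S' (C t) := mod_cast memb_le_membS hp (C t)
      _ ≤ c * optMemb (S.filter (· ∈ cell t)) S' (Q.filter fun R => (R ∩ cell t).Nonempty) := hC t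
      _ ≤ c * optMemb S S' Q := by
        gcongr
        exact hQ.optMemb_filter_mem_le S' (cell t)
  calc (memb p U : ℝ) ≤ ∑ t ∈ T, (memb p (C t) : ℝ) := mod_cast memb_le_sum hT
    _ ≤ T.card • (c * optMemb S S' Q) := Finset.sum_le_card_nsmul _ _ _ fun t _ => memb_le_local t
    _ ≤ n * c * optMemb S S' Q := by
      rw [nsmul_eq_mul, ← mul_assoc]
      gcongr

end Localization

section Grid

theorem mem_gridCell_iff {p : ℝ × ℝ} {i j : ℤ} :
    p ∈ gridCell i j ↔ ⌊p.1⌋ = i ∧ ⌊p.2⌋ = j := by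
  simp only [gridCell, Set.mem_ofPred_eq, Int.floor_eq_iff, and_assoc]

/-- The indices of the `3 × 3` block of grid cells centered at the cell containing `p`; every set
of sup-diameter at most `1` containing `p` lies in the union of these cells. -/
noncomputable def cellBlock (p : ℝ × ℝ) : Finset (ℤ × ℤ) :=
  Finset.Icc (⌊p.1⌋ - 1) (⌊p.1⌋ + 1) ×ˢ Finset.Icc (⌊p.2⌋ - 1) (⌊p.2⌋ + 1)

theorem card_cellBlock (p : ℝ × ℝ) : (cellBlock p).card = 9 := by
  have card_Icc (m : ℤ) : (Finset.Icc (m - 1) (m + 1)).card = 3 := by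
    rw [Int.card_Icc]
    omega
  rw [cellBlock, Finset.card_product, card_Icc, card_Icc]

theorem floor_mem_Icc_of_dist_le_one {x y : ℝ} (h : dist x y ≤ 1) :
    ⌊y⌋ ∈ Finset.Icc (⌊x⌋ - 1) (⌊x⌋ + 1) := by
  obtain ⟨hyx, hxy⟩ := abs_sub_le_iff.1 (Real.dist_eq x y ▸ h)
  rw [Finset.mem_Icc, ← Int.floor_sub_one, ← Int.floor_add_one]
  exact ⟨Int.floor_le_floor (by linarith), Int.floor_le_floor (by linarith)⟩

theorem mem_cellBlock_of_dist_le_one {p q : ℝ × ℝ} {i j : ℤ} (h : dist p q ≤ 1)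
    (hq : q ∈ gridCell i j) : (i, j) ∈ cellBlock p := by
  obtain ⟨rfl, rfl⟩ := mem_gridCell_iff.1 hq
  obtain ⟨h₁, h₂⟩ := max_le_iff.1 (Prod.dist_eq (x := p) (y := q) ▸ h)
  exact Finset.mem_product.2 ⟨floor_mem_Icc_of_dist_le_one h₁, floor_mem_Icc_of_dist_le_one h₂⟩

theorem dist_le_one_of_mem_unitSquare {a b : ℝ} {p q : ℝ × ℝ} (hp : p ∈ unitSquare a b)
    (hq : q ∈ unitSquare a b) : dist p q ≤ 1 := by
  obtain ⟨hp₁, hp₁', hp₂, hp₂'⟩ := hp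
  obtain ⟨hq₁, hq₁', hq₂, hq₂'⟩ := hq
  rw [Prod.dist_eq, Real.dist_eq, Real.dist_eq]
  exact max_le (abs_sub_le_iff.2 ⟨by linarith, by linarith⟩)
    (abs_sub_le_iff.2 ⟨by linarith, by linarith⟩)

end Grid

theorem stmt0_general (S S' : Finset (ℝ × ℝ)) (Q : Finset (Set (ℝ × ℝ)))
    (hdist : ∀ R ∈ Q, ∀ p ∈ R, ∀ q ∈ R, dist p q ≤ 1) (c : ℝ) (hc : 0 ≤ c)
    (Qstar : ℤ → ℤ → Finset (Set (ℝ × ℝ)))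
    (hsub : ∀ i j : ℤ, Qstar i j ⊆ Q.filter (fun R => (R ∩ gridCell i j).Nonempty))
    (hcovloc : ∀ i j : ℤ, IsCover (S.filter (fun p => p ∈ gridCell i j)) (Qstar i j))
    (hmemb : ∀ i j : ℤ, (membS S' (Qstar i j) : ℝ) ≤
      c * (optMemb (S.filter (fun p => p ∈ gridCell i j)) S'
            (Q.filter (fun R => (R ∩ gridCell i j).Nonempty)) : ℕ)) :
    IsCover S (Q.filter (fun R => ∃ i j : ℤ, R ∈ Qstar i j)) ∧
    (membS S' (Q.filter (fun R => ∃ i j : ℤ, R ∈ Qstar i j)) : ℝ) ≤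
      9 * c * (optMemb S S' Q : ℕ) := by
  have hcover : IsCover S (Q.filter fun R => ∃ i j, R ∈ Qstar i j) :=
    isCover_of_isCover_filter_mem (cell := fun t : ℤ × ℤ => gridCell t.1 t.2)
      (fun p _ => ⟨(⌊p.1⌋, ⌊p.2⌋), mem_gridCell_iff.2 ⟨rfl, rfl⟩⟩) (fun t => hcovloc t.1 t.2)
      fun t R hR => Finset.mem_filter.2 ⟨Finset.filter_subset _ _ (hsub _ _ hR), t.1, t.2, hR⟩
  refine ⟨hcover, mod_cast membS_le_mul_optMemb_of_cells hc
    (hcover.mono (Finset.filter_subset _ _)) (fun t : ℤ × ℤ => hmemb t.1 t.2)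
    fun p _ => ⟨cellBlock p, (card_cellBlock p).le, fun R hR hpR => ?_⟩⟩
  obtain ⟨hRQ, i, j, hRij⟩ := Finset.mem_filter.1 hR
  obtain ⟨q, hqR, hq⟩ := (Finset.mem_filter.1 (hsub i j hRij)).2
  exact ⟨(i, j), mem_cellBlock_of_dist_le_one (hdist R hRQ p hpR q hqR) hq, hRij⟩

theorem stmt0 (S S' : Finset (ℝ × ℝ)) (Q : Finset (Set (ℝ × ℝ)))
    (hsq : ∀ R ∈ Q, ∃ a b : ℝ, R = unitSquare a b)
    (hcov : IsCover S Q) (c : ℝ) (hc : 0 ≤ c)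
    (Qstar : ℤ → ℤ → Finset (Set (ℝ × ℝ)))
    (hsub : ∀ i j : ℤ, Qstar i j ⊆ Q.filter (fun R => (R ∩ gridCell i j).Nonempty))
    (hcovloc : ∀ i j : ℤ, IsCover (S.filter (fun p => p ∈ gridCell i j)) (Qstar i j))
    (hmemb : ∀ i j : ℤ, (membS S' (Qstar i j) : ℝ) ≤
      c * (optMemb (S.filter (fun p => p ∈ gridCell i j)) S'
            (Q.filter (fun R => (R ∩ gridCell i j).Nonempty)) : ℕ)) :
    IsCover S (Q.filter (fun R => ∃ i j : ℤ, R ∈ Qstar i j)) ∧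
    (membS S' (Q.filter (fun R => ∃ i j : ℤ, R ∈ Qstar i j)) : ℝ) ≤
      9 * c * (optMemb S S' Q : ℕ) :=
  stmt0_general S S' Q (fun R hR _ hp _ hq => let ⟨_, _, h⟩ := hsq R hR
    dist_le_one_of_mem_unitSquare (h ▸ hp) (h ▸ hq)) c hc Qstar hsub hcovloc hmemb
end

section
/- Let □ = [c_x, c_x+1] × [c_y, c_y+1] be a closed unit cell with bottom-left corner c = (c_x, c_y). Let 𝒬 be a finite set of unit squares each containing c, let S_0 ⊆ □ be a finite set of points with S_0 ⊆ ⋃𝒬, and let 𝒬_0 ⊆ 𝒬 be a minimum-size set cover of S_0 (i.e., |𝒬_0| ≤ |ℛ| for every set cover ℛ ⊆ 𝒬 of S_0). Then every fractional set cover x̂ of S_0 by 𝒬 satisfies Σ_{Q ∈ 𝒬} x̂(Q) ≥ |𝒬_0|. -/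
open scoped Classical

/-- `x` is a fractional set cover of `A` by the finite family `F`. -/
def IsFracCover (A : Finset (ℝ × ℝ)) (F : Finset (Set (ℝ × ℝ))) (x : Set (ℝ × ℝ) → ℝ) : Prop :=
  (∀ R ∈ F, 0 ≤ x R ∧ x R ≤ 1) ∧
  ∀ a ∈ A, 1 ≤ ∑ R ∈ F.filter (fun R => a ∈ R), x R

/-- The fractional membership of a point `p` with respect to `x`. -/
noncomputable def membFracP (p : ℝ × ℝ) (F : Finset (Set (ℝ × ℝ))) (x : Set (ℝ × ℝ) → ℝ) : ℝ :=
  ∑ R ∈ F.filter (fun R => p ∈ R), x R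

/-- The fractional membership of a finite point set `A'` with respect to `x`. -/
noncomputable def membFrac (A' : Finset (ℝ × ℝ)) (F : Finset (Set (ℝ × ℝ)))
    (x : Set (ℝ × ℝ) → ℝ) : ℝ :=
  ⨆ p ∈ A', membFracP p F x

/-!
Seen from points above and to the right of `c`, a unit square containing `c` is a lower-left
quadrant. For quadrants the greedy algorithm is optimal: take a topmost uncovered point `p` and,
among the quadrants containing `p`, the one `R` that reaches furthest right. Every other uncovered
point lying in a common quadrant with `p` also lies in `R`, so after `R` is chosen no quadrant
contains `p` and a remaining point. The greedy cover thus has no more sets than there are selected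
points `p`, no two of which share a quadrant, and a fractional cover spends weight at least `1` on
each of them separately.
-/

section SetFamily

variable {α : Type*} {F : Finset (Set α)}

/-- The member `R` of the family `F` is *dominant at* the point `p` relative to the ground set `T`:
it contains `p`, together with every point of `T` that shares a member of `F` with `p`. This is the
property that makes choosing `R` in order to cover `p` an optimal greedy move. -/
structure IsDominantAt (F : Finset (Set α)) (T : Set α) (p : α) (R : Set α) : Prop where
  mem_family : R ∈ F
  mem_set : p ∈ R
  inter_subset : ∀ R' ∈ F, p ∈ R' → T ∩ R' ⊆ R

theorem IsDominantAt.subsingleton_insert_inter {T I R R' : Set α} {p : α}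
    (hR : IsDominantAt F T p R) (hIT : I ⊆ T) (hIR : Disjoint I R) (hR' : R' ∈ F)
    (hI : (I ∩ R').Subsingleton) : (insert p I ∩ R').Subsingleton := by
  by_cases hp : p ∈ R'
  · have hIR' : I ∩ R' = ∅ := Set.eq_empty_of_forall_notMem fun q hq =>
      hIR.notMem_of_mem_left hq.1 (hR.inter_subset R' hR' hp ⟨hIT hq.1, hq.2⟩)
    rw [Set.insert_inter_of_mem hp, hIR', insert_empty_eq]
    exact Set.subsingleton_singleton
  · rwa [Set.insert_inter_of_notMem hp]

theorem exists_cover_card_le_card_packing {S : Finset α}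
    (hS : ∀ T ⊆ S, T.Nonempty → ∃ p ∈ T, ∃ R, IsDominantAt F T p R) :
    ∃ G ⊆ F, ∃ I ⊆ S, (∀ p ∈ S, ∃ R ∈ G, p ∈ R) ∧
      (∀ R ∈ F, (↑I ∩ R).Subsingleton) ∧ G.card ≤ I.card := by
  induction S using Finset.strongInduction with
  | H S ih =>
    rcases S.eq_empty_or_nonempty with rfl | hne
    · exact ⟨∅, by simp, ∅, by simp⟩
    obtain ⟨p, hpS, R, hR⟩ := hS S (Finset.Subset.refl S) hne
    have hrest : S.filter (· ∉ R) ⊂ S :=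
      Finset.filter_ssubset.2 ⟨p, hpS, not_not.2 hR.mem_set⟩
    obtain ⟨G, hGF, I, hIrest, hcover, hpacking, hcard⟩ :=
      ih _ hrest fun T hT => hS T (hT.trans hrest.subset)
    have hIS : I ⊆ S := hIrest.trans hrest.subset
    have hIR : ∀ q ∈ I, q ∉ R := fun q hq => (Finset.mem_filter.1 (hIrest hq)).2
    refine ⟨insert R G, Finset.insert_subset hR.mem_family hGF,
      insert p I, Finset.insert_subset hpS hIS, fun q hq => ?_, fun R' hR' => ?_, ?_⟩
    · by_cases hqR : q ∈ R
      · exact ⟨R, Finset.mem_insert_self R G, hqR⟩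
      · obtain ⟨R', hR', hqR'⟩ := hcover q (Finset.mem_filter.2 ⟨hq, hqR⟩)
        exact ⟨R', Finset.mem_insert_of_mem hR', hqR'⟩
    · rw [Finset.coe_insert]
      exact hR.subsingleton_insert_inter (Finset.coe_subset.2 hIS)
        (Set.disjoint_left.2 hIR) hR' (hpacking R' hR')
    · calc (insert R G).card ≤ G.card + 1 := Finset.card_insert_le R G
        _ ≤ I.card + 1 := by gcongr
        _ = (insert p I).card :=
          (Finset.card_insert_of_notMem fun hp => hIR p hp hR.mem_set).symm

theorem card_packing_le_sum_weight {𝕜 : Type*} [Semiring 𝕜] [PartialOrder 𝕜] [IsOrderedRing 𝕜]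
    {I : Finset α} {x : Set α → 𝕜} (hI : ∀ R ∈ F, (↑I ∩ R).Subsingleton)
    (hx_nonneg : ∀ R ∈ F, 0 ≤ x R) (hx_cover : ∀ p ∈ I, 1 ≤ ∑ R ∈ F with p ∈ R, x R) :
    (I.card : 𝕜) ≤ ∑ R ∈ F, x R := by
  have hcard : ∀ R ∈ F, (I.filter (· ∈ R)).card ≤ 1 := fun R hR =>
    Finset.card_le_one_iff_subsingleton.2 (by rw [Finset.coe_filter]; exact hI R hR)
  calc (I.card : 𝕜) = ∑ p ∈ I, 1 := by rw [Finset.sum_const, nsmul_one]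
    _ ≤ ∑ p ∈ I, ∑ R ∈ F with p ∈ R, x R := Finset.sum_le_sum hx_cover
    _ = ∑ R ∈ F, ∑ p ∈ I with p ∈ R, x R := Finset.sum_comm' fun p R => by
        simp only [Finset.mem_filter]; tauto
    _ = ∑ R ∈ F, (I.filter (· ∈ R)).card • x R := by simp only [Finset.sum_const]
    _ ≤ ∑ R ∈ F, x R := Finset.sum_le_sum fun R hR =>
      (nsmul_le_nsmul_left (hx_nonneg R hR) (hcard R hR)).trans_eq (one_nsmul _)

end SetFamily

section Quadrant

variable {α β : Type*} [LinearOrder α] [LinearOrder β]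
  {S : Finset (α × β)} {Q : Finset (Set (α × β))}

theorem exists_isDominantAt_of_quadrants (hQ : ∀ R ∈ Q, ∃ t, ∀ p ∈ S, p ∈ R ↔ p ≤ t)
    (hcover : ∀ p ∈ S, ∃ R ∈ Q, p ∈ R) (hne : S.Nonempty) :
    ∃ p ∈ S, ∃ R, IsDominantAt Q S p R := by
  obtain ⟨p, hpS, hp_top⟩ := S.exists_max_image Prod.snd hne
  have : Nonempty (α × β) := ⟨p⟩
  choose! corner hcorner using hQ
  obtain ⟨R₀, hR₀, hpR₀⟩ := hcover p hpS
  obtain ⟨R, hR, hR_right⟩ := (Q.filter (p ∈ ·)).exists_max_image (fun R => (corner R).1)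
    ⟨R₀, Finset.mem_filter.2 ⟨hR₀, hpR₀⟩⟩
  obtain ⟨hRQ, hpR⟩ := Finset.mem_filter.1 hR
  refine ⟨p, hpS, R, hRQ, hpR, fun R' hR' hpR' q ⟨hqS, hqR'⟩ => ?_⟩
  have hq_left : q.1 ≤ (corner R).1 :=
    ((hcorner R' hR' q hqS).1 hqR').1.trans (hR_right R' (Finset.mem_filter.2 ⟨hR', hpR'⟩))
  have hq_below : q.2 ≤ (corner R).2 :=
    (hp_top q hqS).trans ((hcorner R hRQ p hpS).1 hpR).2
  exact (hcorner R hRQ q hqS).2 ⟨hq_left, hq_below⟩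

theorem stmt3_general {𝕜 : Type*} [Semiring 𝕜] [PartialOrder 𝕜] [IsStrictOrderedRing 𝕜]
    (hQ : ∀ R ∈ Q, ∃ t, ∀ p ∈ S, p ∈ R ↔ p ≤ t) {x : Set (α × β) → 𝕜}
    (hx_nonneg : ∀ R ∈ Q, 0 ≤ x R) (hx_cover : ∀ p ∈ S, 1 ≤ ∑ R ∈ Q with p ∈ R, x R) :
    ∃ G ⊆ Q, (∀ p ∈ S, ∃ R ∈ G, p ∈ R) ∧ (G.card : 𝕜) ≤ ∑ R ∈ Q, x R := by
  have hcover : ∀ p ∈ S, ∃ R ∈ Q, p ∈ R := fun p hp =>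
    Finset.filter_nonempty_iff.1 <|
      Finset.nonempty_of_sum_ne_zero (zero_lt_one.trans_le (hx_cover p hp)).ne'
  obtain ⟨G, hGQ, I, hIS, hG_cover, hI, hcard⟩ :=
    exists_cover_card_le_card_packing fun T hT => exists_isDominantAt_of_quadrants
      (fun R hR => (hQ R hR).imp fun _ ht p hp => ht p (hT hp)) fun p hp => hcover p (hT hp)
  exact ⟨G, hGQ, hG_cover, (Nat.mono_cast hcard).trans
    (card_packing_le_sum_weight hI hx_nonneg fun p hp => hx_cover p (hIS hp))⟩

end Quadrant

theorem exists_forall_mem_iff_le_of_unitSquare {cx cy : ℝ} {R : Set (ℝ × ℝ)}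
    (hR : ∃ a b : ℝ, R = unitSquare a b) (hc : (cx, cy) ∈ R) :
    ∃ t, ∀ p ∈ unitSquare cx cy, p ∈ R ↔ p ≤ t := by
  obtain ⟨a, b, rfl⟩ := hR
  refine ⟨(a + 1, b + 1), fun p hp => ⟨fun ⟨_, hright, _, htop⟩ => ⟨hright, htop⟩,
    fun ⟨hright, htop⟩ => ⟨?_, hright, ?_, htop⟩⟩⟩
  · exact hc.1.trans hp.1
  · exact hc.2.2.1.trans hp.2.2.1

theorem stmt3 (cx cy : ℝ) (Q : Finset (Set (ℝ × ℝ)))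
    (hsq : ∀ R ∈ Q, (∃ a b : ℝ, R = unitSquare a b) ∧ (cx, cy) ∈ R)
    (S0 : Finset (ℝ × ℝ)) (hS0 : ∀ p ∈ S0, p ∈ unitSquare cx cy)
    (hcov : IsCover S0 Q)
    (Q0 : Finset (Set (ℝ × ℝ))) (hQ0sub : Q0 ⊆ Q) (hQ0cov : IsCover S0 Q0)
    (hQ0min : ∀ G ⊆ Q, IsCover S0 G → Q0.card ≤ G.card)
    (x : Set (ℝ × ℝ) → ℝ) (hx : IsFracCover S0 Q x) :
    (Q0.card : ℝ) ≤ ∑ R ∈ Q, x R := by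
  obtain ⟨G, hGQ, hG, hcard⟩ := stmt3_general (fun R hR =>
    (exists_forall_mem_iff_le_of_unitSquare (hsq R hR).1 (hsq R hR).2).imp
      fun _ ht p hp => ht p (hS0 p hp)) (fun R hR => (hx.1 R hR).1) hx.2
  exact (Nat.mono_cast (hQ0min G hGQ hG)).trans hcard
end

section
/- Let □ = [c_x, c_x+1] × [c_y, c_y+1] be a closed unit cell with bottom-left corner c = (c_x, c_y), let S ⊆ □ be a finite set of points, let S' ⊆ ℝ² be a finite set of points, and let 𝒬 be a finite set of unit squares each containing c with S ⊆ ⋃𝒬. Let 𝒬_max ⊆ 𝒬 be the set of maximal squares of 𝒬 (squares not dominated by any other square of 𝒬), and let 𝒬* ⊆ 𝒬_max be a set cover of S of minimum size, i.e., |𝒬*| ≤ |ℛ| for every set cover ℛ ⊆ 𝒬 of S. Then for every fractional set cover x of S by 𝒬, memb(S', 𝒬*) ≤ memb(S', x) + 2. -/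
open scoped Classical

/-!
All squares contain the corner `c` of the cell, so on the cell a square is determined by its
upper right corner: it contains exactly the points below that corner. Hence, if `s` is a topmost
point of `S` and `R` the rightmost square containing `s`, then every square containing `s` meets
`S` inside `R`. Choosing `R` greedily and discarding the points of `R` produces a cover and equally
many points `s`, no two of which lie in a common square. A minimum cover `𝒬*` is therefore no
larger than this independent set, and each of its squares `M` has a private point `q M` in it.

Fix `p`, and let `L`, `N` be the leftmost and rightmost squares of `𝒬*` containing `p`. By
maximality the corners of `𝒬*` form a descending staircase, which forces every square containing
`q M`, for any other `M` in `𝒬*` containing `p`, to have its corner in the box spanned by those of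
`L` and `N`, hence to contain `p`. No square contains two points `q M`, so summing the fractional
covering constraints at these points shows that there are at most `membFracP p 𝒬 x` such `M`; `L`
and `N` account for the `+ 2`.
-/

section Combinatorics

variable {α : Type*} {Q : Finset (Set α)}

/-- The notion dual to a set cover: `P` is independent in `Q` if no set of `Q` contains two
points of `P`, so that every cover of `P` by `Q` has at least `P.card` members. -/
def IsIndependent (Q : Finset (Set α)) (P : Finset α) : Prop :=
  ∀ R ∈ Q, ((P : Set α) ∩ R).Subsingleton

theorem IsIndependent.subset {P T : Finset α} (hP : IsIndependent Q P) (hTP : T ⊆ P) :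
    IsIndependent Q T :=
  fun R hR => (hP R hR).anti (Set.inter_subset_inter_left R (Finset.coe_subset.2 hTP))

theorem IsIndependent.insert {P : Finset α} {s : α} (hP : IsIndependent Q P)
    (hs : ∀ R ∈ Q, s ∈ R → ∀ t ∈ P, t ∉ R) : IsIndependent Q (insert s P) := by
  rintro R hR u ⟨hu, huR⟩ v ⟨hv, hvR⟩
  rcases Finset.mem_insert.1 hu with rfl | huP <;> rcases Finset.mem_insert.1 hv with rfl | hvP
  · rfl
  · exact absurd hvR (hs R hR huR v hvP)
  · exact absurd huR (hs R hR hvR u huP)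
  · exact hP R hR ⟨huP, huR⟩ ⟨hvP, hvR⟩

theorem exists_cover_isIndependent_card_le {S : Finset α}
    (hgreedy : ∀ T ⊆ S, T.Nonempty →
      ∃ s ∈ T, ∃ R ∈ Q, s ∈ R ∧ ∀ R' ∈ Q, s ∈ R' → (T : Set α) ∩ R' ⊆ R) :
    ∃ G ⊆ Q, (∀ s ∈ S, ∃ R ∈ G, s ∈ R) ∧
      ∃ P ⊆ S, IsIndependent Q P ∧ G.card ≤ P.card := by
  induction S using Finset.strongInduction with
  | H S ih =>
    rcases S.eq_empty_or_nonempty with rfl | hne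
    · exact ⟨∅, by simp, by simp, ∅, by simp, by simp [IsIndependent], le_rfl⟩
    obtain ⟨s, hs, R, hR, hsR, hsubR⟩ := hgreedy S subset_rfl hne
    have hfilter : S.filter (· ∉ R) ⊆ S := Finset.filter_subset _ _
    obtain ⟨G, hGQ, hG, P, hPS, hP, hcard⟩ :=
      ih (S.filter (· ∉ R)) (Finset.filter_ssubset.2 ⟨s, hs, not_not.2 hsR⟩)
        fun T hT => hgreedy T (hT.trans hfilter)
    have hPR : ∀ t ∈ P, t ∉ R := fun t ht => (Finset.mem_filter.1 (hPS ht)).2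
    refine ⟨insert R G, Finset.insert_subset hR hGQ, fun t ht => ?_, insert s P,
      Finset.insert_subset hs (hPS.trans hfilter), hP.insert fun R' hR' hsR' t ht htR' => ?_, ?_⟩
    · by_cases htR : t ∈ R
      · exact ⟨R, Finset.mem_insert_self R G, htR⟩
      · obtain ⟨R', hR', htR'⟩ := hG t (Finset.mem_filter.2 ⟨ht, htR⟩)
        exact ⟨R', Finset.mem_insert_of_mem hR', htR'⟩
    · exact hPR t ht (hsubR R' hR' hsR' ⟨hfilter (hPS ht), htR'⟩)
    · rw [Finset.card_insert_of_notMem fun hsP => hPR s hsP hsR]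
      exact (Finset.card_insert_le R G).trans (Nat.succ_le_succ hcard)

theorem IsIndependent.exists_forall_mem_iff_eq {P : Finset α} (hP : IsIndependent Q P)
    (hcov : ∀ s ∈ P, ∃ R ∈ Q, s ∈ R) (hcard : Q.card ≤ P.card) :
    ∀ R ∈ Q, ∃ s ∈ P, ∀ R' ∈ Q, s ∈ R' ↔ R' = R := by
  choose! f hfQ hmem using hcov
  have hinj : Set.InjOn f P := fun s hs t ht hst =>
    hP (f s) (hfQ s hs) ⟨hs, hmem s hs⟩ ⟨ht, hst ▸ hmem t ht⟩
  have hsurj : Set.SurjOn f P Q := Finset.surjOn_of_injOn_of_card_le f hfQ hinj hcard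
  intro R hR
  obtain ⟨s, hs, rfl⟩ := hsurj hR
  refine ⟨s, hs, fun R' hR' => ⟨fun hsR' => ?_, fun h => h ▸ hmem s hs⟩⟩
  obtain ⟨t, ht, rfl⟩ := hsurj hR'
  exact congrArg f (hP (f t) hR' ⟨ht, hmem t ht⟩ ⟨hs, hsR'⟩)

end Combinatorics

section Membership

variable {S' : Finset (ℝ × ℝ)} {Q : Finset (Set (ℝ × ℝ))} {x : Set (ℝ × ℝ) → ℝ}

theorem membS_le {r : ℝ} (hr : 0 ≤ r) (h : ∀ p ∈ S', (memb p Q : ℝ) ≤ r) :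
    (membS S' Q : ℝ) ≤ r :=
  (Nat.le_floor_iff hr).1 (Finset.sup_le fun p hp => Nat.le_floor (h p hp))

theorem membFracP_nonneg (hx : ∀ R ∈ Q, 0 ≤ x R) (p : ℝ × ℝ) : 0 ≤ membFracP p Q x :=
  Finset.sum_nonneg fun R hR => hx R (Finset.mem_of_mem_filter R hR)

theorem membFrac_nonneg (hx : ∀ R ∈ Q, 0 ≤ x R) : 0 ≤ membFrac S' Q x :=
  Real.iSup_nonneg fun p => Real.iSup_nonneg fun _ => membFracP_nonneg hx p

theorem membFracP_le_membFrac (hx : ∀ R ∈ Q, 0 ≤ x R) {p : ℝ × ℝ} (hp : p ∈ S') :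
    membFracP p Q x ≤ membFrac S' Q x := by
  have hbdd : BddAbove (Set.range fun q => ⨆ _ : q ∈ S', membFracP q Q x) := by
    refine ⟨∑ R ∈ Q, x R, ?_⟩
    rintro _ ⟨q, rfl⟩
    exact Real.iSup_le (fun _ => Finset.sum_le_sum_of_subset_of_nonneg (Finset.filter_subset _ _)
      fun R hR _ => hx R hR) (Finset.sum_nonneg hx)
  calc membFracP p Q x = ⨆ _ : p ∈ S', membFracP p Q x :=
        (ciSup_pos (f := fun _ => membFracP p Q x) hp).symm
    _ ≤ membFrac S' Q x := le_ciSup hbdd p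

-- Weak LP duality between covering and packing, localized at `p`.
theorem IsIndependent.card_le_membFracP {T : Finset (ℝ × ℝ)} (hT : IsIndependent Q T)
    (hx : ∀ R ∈ Q, 0 ≤ x R) (hcov : ∀ t ∈ T, 1 ≤ membFracP t Q x) {p : ℝ × ℝ}
    (hp : ∀ t ∈ T, ∀ R ∈ Q, t ∈ R → p ∈ R) : (T.card : ℝ) ≤ membFracP p Q x := by
  have hdisj : (T : Set (ℝ × ℝ)).PairwiseDisjoint fun t => Q.filter (t ∈ ·) := by
    intro t ht u hu htu
    refine Finset.disjoint_left.2 fun R htR huR => htu ?_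
    obtain ⟨hR, htR⟩ := Finset.mem_filter.1 htR
    exact hT R hR ⟨ht, htR⟩ ⟨hu, (Finset.mem_filter.1 huR).2⟩
  have hsub : T.biUnion (fun t => Q.filter (t ∈ ·)) ⊆ Q.filter (p ∈ ·) :=
    Finset.biUnion_subset.2 fun t ht => Finset.monotone_filter_right Q (hp t ht)
  calc (T.card : ℝ) = ∑ _ ∈ T, (1 : ℝ) := by simp
    _ ≤ ∑ t ∈ T, membFracP t Q x := Finset.sum_le_sum hcov
    _ = ∑ R ∈ T.biUnion fun t => Q.filter (t ∈ ·), x R := (Finset.sum_biUnion hdisj).symm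
    _ ≤ membFracP p Q x := Finset.sum_le_sum_of_subset_of_nonneg hsub
      fun R hR _ => hx R (Finset.mem_of_mem_filter R hR)

end Membership

theorem Icc_add_inter_Icc_add_subset {α : Type*} [AddCommGroup α] [Lattice α]
    [IsOrderedAddMonoid α] {u v w e : α} (hinf : u ⊓ v ≤ w) (hsup : w ≤ u ⊔ v) :
    Set.Icc u (u + e) ∩ Set.Icc v (v + e) ⊆ Set.Icc w (w + e) := by
  rintro p ⟨⟨hup, hpu⟩, hvp, hpv⟩
  rw [← sub_le_iff_le_add] at hpu hpv
  exact ⟨hsup.trans (sup_le hup hvp), sub_le_iff_le_add.1 ((le_inf hpu hpv).trans hinf)⟩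

theorem csInf_Icc_prod {α β : Type*} [ConditionallyCompleteLattice α]
    [ConditionallyCompleteLattice β] {v w : α × β} (h : v ≤ w) : sInf (Set.Icc v w) = v := by
  rw [Set.Icc_prod_eq, sInf_prod (Set.nonempty_Icc.2 h.1) (Set.nonempty_Icc.2 h.2),
    csInf_Icc h.1, csInf_Icc h.2]

section UnitSquares

theorem unitSquare_eq_Icc (a b : ℝ) : unitSquare a b = Set.Icc (a, b) ((a, b) + 1) := by
  ext p
  simp only [unitSquare, Set.mem_ofPred_eq, Set.mem_Icc, Prod.le_def, Prod.fst_add, Prod.snd_add,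
    Prod.fst_one, Prod.snd_one]
  tauto

/-- `R` is a unit square containing the point `c`. Its bottom-left corner is recovered as `sInf R`
for the coordinatewise order on `ℝ × ℝ`. -/
def IsUnitSquareThrough (c : ℝ × ℝ) (R : Set (ℝ × ℝ)) : Prop :=
  (∃ a b : ℝ, R = unitSquare a b) ∧ c ∈ R

/-- `R` is maximal in `Q` with respect to the unit cell with bottom-left corner `c`: no other
square of `Q` dominates it. -/
def IsMaximalSquare (c : ℝ × ℝ) (Q : Finset (Set (ℝ × ℝ))) (R : Set (ℝ × ℝ)) : Prop :=
  ∀ R' ∈ Q, R' ≠ R → ¬ (R ∩ unitSquare c.1 c.2 ⊆ R' ∩ unitSquare c.1 c.2)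

variable {c p s : ℝ × ℝ} {R R' : Set (ℝ × ℝ)} {Q : Finset (Set (ℝ × ℝ))}

namespace IsUnitSquareThrough

theorem eq_Icc (hR : IsUnitSquareThrough c R) : R = Set.Icc (sInf R) (sInf R + 1) := by
  obtain ⟨⟨a, b, rfl⟩, -⟩ := hR
  rw [unitSquare_eq_Icc, csInf_Icc_prod (le_add_of_nonneg_right zero_le_one)]

theorem sInf_le (hR : IsUnitSquareThrough c R) : sInf R ≤ c := by
  have hc := hR.2
  rw [hR.eq_Icc] at hc
  exact hc.1

theorem mem_iff_le_sInf_add_one (hR : IsUnitSquareThrough c R) (hp : c ≤ p) :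
    p ∈ R ↔ p ≤ sInf R + 1 := by
  conv_lhs => rw [hR.eq_Icc]
  exact and_iff_right (hR.sInf_le.trans hp)

theorem inter_unitSquare_subset (hR : IsUnitSquareThrough c R) (hR' : IsUnitSquareThrough c R')
    (hle : sInf R ≤ sInf R') : R ∩ unitSquare c.1 c.2 ⊆ R' ∩ unitSquare c.1 c.2 := by
  rintro p ⟨hpR, hpc⟩
  have hcp : c ≤ p := ⟨hpc.1, hpc.2.2.1⟩
  rw [hR.mem_iff_le_sInf_add_one hcp] at hpR
  exact ⟨(hR'.mem_iff_le_sInf_add_one hcp).2 (hpR.trans (add_le_add_left hle 1)), hpc⟩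

end IsUnitSquareThrough

-- The corners of the maximal squares form a descending staircase, and no corner lies above it.
theorem IsMaximalSquare.snd_sInf_le (hmax : IsMaximalSquare c Q R)
    (hQ : ∀ R ∈ Q, IsUnitSquareThrough c R) (hR : R ∈ Q) (hR' : R' ∈ Q)
    (hfst : (sInf R).1 ≤ (sInf R').1) : (sInf R').2 ≤ (sInf R).2 := by
  rcases eq_or_ne R' R with rfl | hne
  · exact le_rfl
  · by_contra! hsnd
    exact hmax R' hR' hne ((hQ R hR).inter_unitSquare_subset (hQ R' hR') ⟨hfst, hsnd.le⟩)

theorem exists_mem_forall_inter_subset {T : Finset (ℝ × ℝ)}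
    (hQ : ∀ R ∈ Q, IsUnitSquareThrough c R) (hT : ∀ t ∈ T, c ≤ t) (hcov : IsCover T Q)
    (hne : T.Nonempty) :
    ∃ s ∈ T, ∃ R ∈ Q, s ∈ R ∧ ∀ R' ∈ Q, s ∈ R' → (T : Set (ℝ × ℝ)) ∩ R' ⊆ R := by
  obtain ⟨s, hs, htop⟩ := T.exists_max_image Prod.snd hne
  obtain ⟨R₀, hR₀, hsR₀⟩ := hcov s hs
  obtain ⟨R, hR, hright⟩ := (Q.filter (s ∈ ·)).exists_max_image (fun R => (sInf R).1)
    ⟨R₀, Finset.mem_filter.2 ⟨hR₀, hsR₀⟩⟩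
  obtain ⟨hR, hsR⟩ := Finset.mem_filter.1 hR
  refine ⟨s, hs, R, hR, hsR, ?_⟩
  rintro R' hR' hsR' t ⟨ht, htR'⟩
  have hR'R := hright R' (Finset.mem_filter.2 ⟨hR', hsR'⟩)
  rw [(hQ R hR).mem_iff_le_sInf_add_one (hT s hs)] at hsR
  rw [(hQ R' hR').mem_iff_le_sInf_add_one (hT t ht)] at htR'
  rw [(hQ R hR).mem_iff_le_sInf_add_one (hT t ht)]
  exact ⟨htR'.1.trans (add_le_add_left hR'R 1), (htop t ht).trans hsR.2⟩

-- A point `s` of the middle square `M` outside `L` and `N` is to the right of `L` and above `N`,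
-- so the corner of any `R` containing `s` lies in the box spanned by the corners of `L` and `N`.
theorem mem_of_mem_between {L M N : Set (ℝ × ℝ)} (hQ : ∀ R ∈ Q, IsUnitSquareThrough c R)
    (hL : L ∈ Q) (hM : M ∈ Q) (hN : N ∈ Q) (hR : R ∈ Q)
    (hLmax : IsMaximalSquare c Q L) (hNmax : IsMaximalSquare c Q N)
    (hLM : (sInf L).1 ≤ (sInf M).1) (hMN : (sInf M).1 ≤ (sInf N).1)
    (hs : c ≤ s) (hsM : s ∈ M) (hsL : s ∉ L) (hsN : s ∉ N) (hsR : s ∈ R)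
    (hpL : p ∈ L) (hpN : p ∈ N) : p ∈ R := by
  rw [(hQ M hM).mem_iff_le_sInf_add_one hs] at hsM
  rw [(hQ L hL).mem_iff_le_sInf_add_one hs] at hsL
  rw [(hQ N hN).mem_iff_le_sInf_add_one hs] at hsN
  rw [(hQ R hR).mem_iff_le_sInf_add_one hs] at hsR
  have hsnd_ML : (sInf M).2 ≤ (sInf L).2 := hLmax.snd_sInf_le hQ hL hM hLM
  have hs_right : (sInf L).1 + 1 < s.1 := by
    by_contra! h
    exact hsL ⟨h, hsM.2.trans (add_le_add_left hsnd_ML 1)⟩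
  have hs_above : (sInf N).2 + 1 < s.2 := by
    by_contra! h
    exact hsN ⟨hsM.1.trans (add_le_add_left hMN 1), h⟩
  have hfst_LR : (sInf L).1 < (sInf R).1 := lt_of_add_lt_add_right (hs_right.trans_le hsR.1)
  have hsnd_NR : (sInf N).2 < (sInf R).2 := lt_of_add_lt_add_right (hs_above.trans_le hsR.2)
  have hfst_RN : (sInf R).1 ≤ (sInf N).1 := by
    by_contra! h
    exact hsnd_NR.not_ge (hNmax.snd_sInf_le hQ hN hR h.le)
  have hsnd_RL : (sInf R).2 ≤ (sInf L).2 := hLmax.snd_sInf_le hQ hL hR hfst_LR.le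
  have hinf : sInf L ⊓ sInf N ≤ sInf R :=
    ⟨inf_le_left.trans hfst_LR.le, inf_le_right.trans hsnd_NR.le⟩
  have hsup : sInf R ≤ sInf L ⊔ sInf N :=
    ⟨hfst_RN.trans le_sup_right, hsnd_RL.trans le_sup_left⟩
  rw [(hQ L hL).eq_Icc] at hpL
  rw [(hQ N hN).eq_Icc] at hpN
  rw [(hQ R hR).eq_Icc]
  exact Icc_add_inter_Icc_add_subset hinf hsup ⟨hpL, hpN⟩

theorem memb_le_membFracP_add_two {F : Finset (Set (ℝ × ℝ))} {P : Finset (ℝ × ℝ)}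
    {x : Set (ℝ × ℝ) → ℝ} (hQ : ∀ R ∈ Q, IsUnitSquareThrough c R) (hFQ : F ⊆ Q)
    (hmax : ∀ R ∈ F, IsMaximalSquare c Q R) (hP : IsIndependent Q P) (hcP : ∀ s ∈ P, c ≤ s)
    (hcov : IsCover P F) (hcard : F.card ≤ P.card)
    (hx : ∀ R ∈ Q, 0 ≤ x R) (hxP : ∀ s ∈ P, 1 ≤ membFracP s Q x) (p : ℝ × ℝ) :
    (memb p F : ℝ) ≤ membFracP p Q x + 2 := by
  have hPF : IsIndependent F P := fun R hR => hP R (hFQ hR)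
  choose! q hqP hq using hPF.exists_forall_mem_iff_eq hcov hcard
  have hq_self : ∀ R ∈ F, q R ∈ R := fun R hR => (hq R hR R hR).2 rfl
  have hq_inj : Set.InjOn q F := fun R hR R' hR' h => (hq R' hR' R hR).1 (h ▸ hq_self R hR)
  rcases (F.filter (p ∈ ·)).eq_empty_or_nonempty with hempty | hne
  · have := membFracP_nonneg hx p
    simp only [memb, hempty, Finset.card_empty, Nat.cast_zero]
    positivity
  obtain ⟨L, hL, hleft⟩ := Finset.exists_min_image _ (fun R => (sInf R).1) hne
  obtain ⟨N, hN, hright⟩ := Finset.exists_max_image _ (fun R => (sInf R).1) hne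
  set I := F.filter (p ∈ ·) \ {L, N}
  have hIF : I ⊆ F := Finset.sdiff_subset.trans (Finset.filter_subset _ _)
  have hmemb : memb p F ≤ I.card + 2 :=
    (Finset.card_le_card_sdiff_add_card (t := {L, N})).trans
      (Nat.add_le_add_left Finset.card_le_two _)
  have hqI : I.image q ⊆ P := Finset.image_subset_iff.2 fun M hM => hqP M (hIF hM)
  have hp : ∀ M ∈ I, ∀ R ∈ Q, q M ∈ R → p ∈ R := by
    intro M hM R hR hqR
    obtain ⟨hMp, hMLN⟩ := Finset.mem_sdiff.1 hM
    simp only [Finset.mem_insert, Finset.mem_singleton, not_or] at hMLN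
    obtain ⟨hLF, hpL⟩ := Finset.mem_filter.1 hL
    obtain ⟨hNF, hpN⟩ := Finset.mem_filter.1 hN
    have hMF := hIF hM
    exact mem_of_mem_between hQ (hFQ hLF) (hFQ hMF) (hFQ hNF) hR (hmax L hLF) (hmax N hNF)
      (hleft M hMp) (hright M hMp) (hcP _ (hqP M hMF)) (hq_self M hMF)
      (fun h => hMLN.1 ((hq M hMF L hLF).1 h).symm) (fun h => hMLN.2 ((hq M hMF N hNF).1 h).symm)
      hqR hpL hpN
  calc (memb p F : ℝ) ≤ I.card + 2 := by exact_mod_cast hmemb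
    _ = (I.image q).card + 2 := by rw [Finset.card_image_of_injOn (hq_inj.mono hIF)]
    _ ≤ membFracP p Q x + 2 := by
      gcongr
      exact (hP.subset hqI).card_le_membFracP hx (fun t ht => hxP t (hqI ht))
        (Finset.forall_mem_image.2 hp)

end UnitSquares

theorem stmt5 (cx cy : ℝ) (S S' : Finset (ℝ × ℝ))
    (hS : ∀ p ∈ S, p ∈ unitSquare cx cy)
    (Q : Finset (Set (ℝ × ℝ)))
    (hsq : ∀ R ∈ Q, (∃ a b : ℝ, R = unitSquare a b) ∧ (cx, cy) ∈ R)
    (hcov : IsCover S Q)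
    (Qstar : Finset (Set (ℝ × ℝ))) (hsub : Qstar ⊆ Q)
    -- every square of `Qstar` is maximal in `Q` (not dominated w.r.t. the cell):
    (hmax : ∀ R ∈ Qstar, ∀ R' ∈ Q, R' ≠ R → ¬ (R ∩ unitSquare cx cy ⊆ R' ∩ unitSquare cx cy))
    (hcov' : IsCover S Qstar)
    (hmin : ∀ G ⊆ Q, IsCover S G → Qstar.card ≤ G.card)
    (x : Set (ℝ × ℝ) → ℝ) (hx : IsFracCover S Q x) :
    (membS S' Qstar : ℝ) ≤ membFrac S' Q x + 2 := by
  have hcell : ∀ p ∈ S, (cx, cy) ≤ p := fun p hp => ⟨(hS p hp).1, (hS p hp).2.2.1⟩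
  have hx0 : ∀ R ∈ Q, 0 ≤ x R := fun R hR => (hx.1 R hR).1
  obtain ⟨G, hGQ, hG, P, hPS, hP, hGP⟩ := exists_cover_isIndependent_card_le fun T hTS =>
    exists_mem_forall_inter_subset hsq (fun t ht => hcell t (hTS ht)) fun t ht => hcov t (hTS ht)
  refine membS_le (add_nonneg (membFrac_nonneg hx0) zero_le_two) fun p hp => ?_
  calc (memb p Qstar : ℝ) ≤ membFracP p Q x + 2 :=
        memb_le_membFracP_add_two hsq hsub hmax hP (fun s hs => hcell s (hPS hs))
          (fun s hs => hcov' s (hPS hs)) ((hmin G hGQ hG).trans hGP) hx0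
          (fun s hs => hx.2 s (hPS hs)) p
    _ ≤ membFrac S' Q x + 2 := by
        gcongr
        exact membFracP_le_membFrac hx0 hp
end

section
/- Let ℛ be a finite irreducible family of halfplanes with ⋃ℛ ≠ ℝ². Then for every H ∈ ℛ and every halfplane H' with H' ≠ H, we have ⋃ℛ ≠ ⋃ℛ', where ℛ' = (ℛ \ {H}) ∪ {H'}. -/
open scoped Classical

/-- The halfplane with inward normal `v` and offset `c`: `{p : ⟨p, v⟩ ≥ c}`. -/
def halfplane (v : ℝ × ℝ) (c : ℝ) : Set (ℝ × ℝ) :=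
  {p | c ≤ v.1 * p.1 + v.2 * p.2}

/-- `H` is a halfplane (for some unit inward normal). -/
def IsHalfplane (H : Set (ℝ × ℝ)) : Prop :=
  ∃ v : ℝ × ℝ, ∃ c : ℝ, v.1 ^ 2 + v.2 ^ 2 = 1 ∧ H = halfplane v c

/-- `H` is redundant in the finite family `R`. -/
def Redundant (R : Finset (Set (ℝ × ℝ))) (H : Set (ℝ × ℝ)) : Prop :=
  ⋃₀ (R : Set (Set (ℝ × ℝ))) = ⋃₀ ((R.erase H : Finset (Set (ℝ × ℝ))) : Set (Set (ℝ × ℝ)))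

/-- The finite family `R` is irreducible: no member is redundant. -/
def IrreducibleFam (R : Finset (Set (ℝ × ℝ))) : Prop :=
  ∀ H ∈ R, ¬ Redundant R H

/-- The clockwise ordered angle from `u` to `v`, i.e. the unique `θ ∈ [0, 2π)` such that
rotating `u` clockwise by `θ` yields `v` (for nonzero vectors of equal norm). -/
noncomputable def ang (u v : ℝ × ℝ) : ℝ :=
  let a := Complex.arg ((Complex.ofReal u.1 + Complex.ofReal u.2 * Complex.I) /
      (Complex.ofReal v.1 + Complex.ofReal v.2 * Complex.I))
  if a < 0 then a + 2 * Real.pi else a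

/-!
Let `U` be the union of the members of `R` other than `H`. Its complement is open and convex, and
`H ∪ U = H' ∪ U` says that `H` and `H'` have the same trace on it. Since the complement of `U` meets
both `H` and the complement of `H`, by connectedness it contains a point `r` of the frontier of `H`,
which is then a frontier point of `H'` as well. So `H` and `H'` agree near a common boundary point.
A halfspace is invariant under dilations centred at any of its boundary points, hence it is
determined by its germ there, and `H = H'`.
-/

open Set Filter Topology AffineMap

theorem inter_frontier_nonempty_of_isPreconnected {X : Type*} [TopologicalSpace X] {C s : Set X}
    (hC : IsPreconnected C) (hs : (C ∩ s).Nonempty) (hsc : (C ∩ sᶜ).Nonempty) :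
    (C ∩ frontier s).Nonempty := by
  rw [frontier_eq_closure_inter_closure]
  have hcover : C ⊆ closure s ∪ closure sᶜ := fun x _ =>
    (em (x ∈ s)).imp (subset_closure ·) (subset_closure ·)
  exact isPreconnected_closed_iff.1 hC _ _ isClosed_closure isClosed_closure hcover
    (hs.mono (inter_subset_inter_right _ subset_closure))
    (hsc.mono (inter_subset_inter_right _ subset_closure))

theorem isClosed_sUnion_of_locallyFinite {X : Type*} [TopologicalSpace X] {S : Set (Set X)}
    (hS : LocallyFinite ((↑) : S → Set X)) (hclosed : ∀ s ∈ S, IsClosed s) : IsClosed (⋃₀ S) := by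
  rw [sUnion_eq_iUnion]
  exact hS.isClosed_iUnion fun s => hclosed s s.2

theorem convex_compl_sUnion {𝕜 E : Type*} [Semiring 𝕜] [PartialOrder 𝕜] [AddCommMonoid E]
    [SMul 𝕜 E] {S : Set (Set E)} (hS : ∀ s ∈ S, Convex 𝕜 sᶜ) : Convex 𝕜 (⋃₀ S)ᶜ := by
  rw [compl_sUnion]
  exact convex_sInter (forall_mem_image.2 hS)

section Halfspace

variable {E : Type*} [AddCommGroup E] [Module ℝ E] [TopologicalSpace E]

/-- The closed halfspace `{x | c ≤ f x}` in a real topological vector space. The functional `f` is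
allowed to vanish, in which case the set is empty or the whole space. -/
def closedHalfspace (f : StrongDual ℝ E) (c : ℝ) : Set E :=
  {x | c ≤ f x}

/-- `H` is a closed halfspace (`∅` and the whole space included), the counterpart of `IsHalfplane`
in a real topological vector space. -/
def IsClosedHalfspace (H : Set E) : Prop :=
  ∃ (f : StrongDual ℝ E) (c : ℝ), H = closedHalfspace f c

theorem IsHalfplane.isClosedHalfspace {H : Set (ℝ × ℝ)} (hH : IsHalfplane H) :
    IsClosedHalfspace H := by
  obtain ⟨v, c, -, rfl⟩ := hH
  exact ⟨v.1 • ContinuousLinearMap.fst ℝ ℝ ℝ + v.2 • ContinuousLinearMap.snd ℝ ℝ ℝ, c, rfl⟩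

theorem IsClosedHalfspace.isClosed {H : Set E} (hH : IsClosedHalfspace H) : IsClosed H := by
  obtain ⟨f, c, rfl⟩ := hH
  exact isClosed_le continuous_const f.continuous

theorem IsClosedHalfspace.convex_compl {H : Set E} (hH : IsClosedHalfspace H) :
    Convex ℝ Hᶜ := by
  obtain ⟨f, c, rfl⟩ := hH
  simpa only [closedHalfspace, compl_ofPred, not_le, ContinuousLinearMap.coe_coe] using
    convex_halfSpace_lt f.toLinearMap.isLinear c

theorem apply_eq_of_mem_frontier_closedHalfspace {f : StrongDual ℝ E} {c : ℝ} {x : E}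
    (hx : x ∈ frontier (closedHalfspace f c)) : f x = c :=
  (frontier_le_subset_eq continuous_const f.continuous hx).symm

theorem lineMap_mem_closedHalfspace_iff {f : StrongDual ℝ E} {c t : ℝ} {r : E} (hr : f r = c)
    (ht : 0 < t) (x : E) : lineMap r x t ∈ closedHalfspace f c ↔ x ∈ closedHalfspace f c := by
  have hline : f (lineMap r x t) = c + t * (f x - c) := by
    simp [lineMap_apply_module', hr, add_comm]
  simp only [closedHalfspace, mem_ofPred_eq, hline, le_add_iff_nonneg_right,
    mul_nonneg_iff_of_pos_left ht, sub_nonneg]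

variable [IsTopologicalAddGroup E] [ContinuousSMul ℝ E]

theorem closedHalfspace_eq_of_eventuallyEq_nhds {f f' : StrongDual ℝ E} {c c' : ℝ} {r : E}
    (hr : f r = c) (hr' : f' r = c')
    (h : closedHalfspace f c =ᶠ[𝓝 r] closedHalfspace f' c') :
    closedHalfspace f c = closedHalfspace f' c' := by
  ext x
  have htendsto : Tendsto (lineMap r x : ℝ → E) (𝓝[>] 0) (𝓝 r) :=
    (lineMap_continuous.tendsto' 0 r (lineMap_apply_zero r x)).mono_left nhdsWithin_le_nhds
  obtain ⟨t, hmem, ht⟩ :=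
    ((htendsto.eventually h.mem_iff).and eventually_mem_nhdsWithin).exists
  rwa [lineMap_mem_closedHalfspace_iff hr ht, lineMap_mem_closedHalfspace_iff hr' ht] at hmem

theorem IsClosedHalfspace.eq_of_inter_eq {C H H' : Set E} (hH : IsClosedHalfspace H)
    (hH' : IsClosedHalfspace H') (hC : IsOpen C) (hCconn : IsPreconnected C)
    (hCH : (C ∩ H).Nonempty) (hCHc : (C ∩ Hᶜ).Nonempty) (h : H ∩ C = H' ∩ C) : H = H' := by
  obtain ⟨r, hrC, hr⟩ := inter_frontier_nonempty_of_isPreconnected hCconn hCH hCHc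
  have hr' : r ∈ frontier H' := by
    have hfrontier : frontier H ∩ C = frontier H' ∩ C := by
      rw [← frontier_inter_open_inter hC, h, frontier_inter_open_inter hC]
    exact (hfrontier.subset ⟨hr, hrC⟩).1
  have hgerm : H =ᶠ[𝓝 r] H' :=
    eventuallyEq_set.2 <| (hC.eventually_mem hrC).mono fun x hx => by
      simpa only [mem_inter_iff, hx, and_true] using Set.ext_iff.1 h x
  obtain ⟨f, c, rfl⟩ := hH
  obtain ⟨f', c', rfl⟩ := hH'
  exact closedHalfspace_eq_of_eventuallyEq_nhds (apply_eq_of_mem_frontier_closedHalfspace hr)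
    (apply_eq_of_mem_frontier_closedHalfspace hr') hgerm

theorem IsClosedHalfspace.eq_of_union_eq_union {U H H' : Set E} (hH : IsClosedHalfspace H)
    (hH' : IsClosedHalfspace H') (hU : IsClosed U) (hUconn : IsPreconnected Uᶜ)
    (hHU : ¬H ⊆ U) (hne : H ∪ U ≠ univ) (h : H ∪ U = H' ∪ U) : H = H' := by
  obtain ⟨p, hpH, hpU⟩ := not_subset.1 hHU
  obtain ⟨q, hq⟩ := (ne_univ_iff_exists_notMem _).1 hne
  rw [mem_union, not_or] at hq
  refine hH.eq_of_inter_eq hH' hU.isOpen_compl hUconn ⟨p, hpU, hpH⟩ ⟨q, hq.2, hq.1⟩ ?_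
  rw [← sdiff_eq, ← sdiff_eq, ← union_sdiff_right, h, union_sdiff_right]

theorem stmt6_general {R : Set (Set E)} (hlf : LocallyFinite ((↑) : R → Set E))
    (hR : ∀ G ∈ R, IsClosedHalfspace G) {H : Set E} (hH : H ∈ R) (hirr : ¬H ⊆ ⋃₀ (R \ {H}))
    (hne : ⋃₀ R ≠ univ) {H' : Set E} (hH' : IsClosedHalfspace H') (hne' : H' ≠ H) :
    ⋃₀ R ≠ ⋃₀ insert H' (R \ {H}) := by
  intro heq
  have hunion : ⋃₀ R = H ∪ ⋃₀ (R \ {H}) := by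
    rw [← sUnion_insert, insert_sdiff_self_of_mem hH]
  have hrest : ∀ G ∈ R \ {H}, IsClosedHalfspace G := fun G hG => hR G hG.1
  have hclosed : IsClosed (⋃₀ (R \ {H})) :=
    isClosed_sUnion_of_locallyFinite
      (hlf.comp_injective (inclusion_injective sdiff_subset)) fun G hG => (hrest G hG).isClosed
  have hconvex : Convex ℝ (⋃₀ (R \ {H}))ᶜ :=
    convex_compl_sUnion fun G hG => (hrest G hG).convex_compl
  rw [sUnion_insert, hunion] at heq
  rw [hunion] at hne
  exact hne' ((hR H hH).eq_of_union_eq_union hH' hclosed hconvex.isPreconnected hirr hne heq).symm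

end Halfspace

theorem redundant_iff_subset {R : Finset (Set (ℝ × ℝ))} {H : Set (ℝ × ℝ)} (hH : H ∈ R) :
    Redundant R H ↔ H ⊆ ⋃₀ ((R : Set (Set (ℝ × ℝ))) \ {H}) := by
  rw [Redundant, Finset.coe_erase, ← union_eq_right, ← sUnion_insert,
    insert_sdiff_self_of_mem (Finset.mem_coe.2 hH)]

theorem stmt6 (R : Finset (Set (ℝ × ℝ))) (hhp : ∀ H ∈ R, IsHalfplane H)
    (hirr : IrreducibleFam R) (hne : ⋃₀ (R : Set (Set (ℝ × ℝ))) ≠ Set.univ) :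
    ∀ H ∈ R, ∀ H' : Set (ℝ × ℝ), IsHalfplane H' → H' ≠ H →
      ⋃₀ (R : Set (Set (ℝ × ℝ))) ≠
        ⋃₀ ((insert H' (R.erase H) : Finset (Set (ℝ × ℝ))) : Set (Set (ℝ × ℝ))) := by
  intro H hH H' hH' hne'
  rw [Finset.coe_insert, Finset.coe_erase]
  exact stmt6_general (locallyFinite_of_finite _) (fun G hG => (hhp G hG).isClosedHalfspace) hH
    (mt (redundant_iff_subset hH).2 (hirr H hH)) hne hH'.isClosedHalfspace hne'
end

section
/- Let ℛ be a finite nonempty irreducible family of halfplanes with ⋃ℛ ≠ ℝ² and ⋂ℛ ≠ ∅. Then ℛ can be enumerated as H_1, H_2, …, H_t (where t = |ℛ|) such that 0 < ang(H_1, H_2) < ang(H_1, H_3) < ⋯ < ang(H_1, H_t) < π. -/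
open scoped Classical

/-!
Fix `p` in the intersection and `q` outside the union, and put `d = p - q`. A halfplane containing
`p` but not `q` has inward normal `v` with `⟨v, d⟩ > 0`, so measured from `d` every normal has a
signed clockwise angle in `(-π/2, π/2)`. On that range `ang u v` is the difference of the signed
angles of `v` and `u`, hence listing the family by increasing signed angle gives the required order.
Ties do not occur: halfplanes with the same inward normal are nested, and in an irreducible family
no member contains another.
-/

theorem exists_strictMono_comp_range_eq {α β : Type*} [LinearOrder β] (s : Finset α) {f : α → β}
    (hf : Set.InjOn f s) :
    ∃ g : Fin s.card → α, Set.range g = s ∧ StrictMono (f ∘ g) := by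
  let e : Fin s.card → α := fun i => s.equivFin.symm i
  have hfe : Function.Injective (f ∘ e) :=
    (Set.injOn_iff_injective.1 hf).comp s.equivFin.symm.injective
  have he : Set.range e = s :=
    (s.equivFin.symm.surjective.range_comp Subtype.val).trans Subtype.range_coe
  let σ := Tuple.sort (f ∘ e)
  exact ⟨e ∘ σ, (σ.surjective.range_comp e).trans he,
    (Tuple.monotone_sort (f ∘ e)).strictMono_of_injective (hfe.comp σ.injective)⟩

section Redundancy

variable {R : Finset (Set (ℝ × ℝ))}

theorem redundant_of_subset {H K : Set (ℝ × ℝ)} (hK : K ∈ R) (hne : H ≠ K) (hHK : H ⊆ K) :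
    Redundant R H := by
  refine (Set.sUnion_subset fun L hL => ?_).antisymm
    (Set.sUnion_mono (Finset.coe_subset.2 (R.erase_subset H)))
  obtain rfl | hLH := eq_or_ne L H
  · exact hHK.trans (Set.subset_sUnion_of_mem (Finset.mem_erase.2 ⟨hne.symm, hK⟩))
  · exact Set.subset_sUnion_of_mem (Finset.mem_erase.2 ⟨hLH, hL⟩)

theorem IrreducibleFam.isAntichain (hR : IrreducibleFam R) :
    IsAntichain (· ⊆ ·) (R : Set (Set (ℝ × ℝ))) :=
  fun H hH _ hK hne hHK => hR H hH (redundant_of_subset hK hne hHK)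

end Redundancy

section Halfplane

theorem halfplane_antitone (v : ℝ × ℝ) : Antitone (halfplane v) :=
  fun _ _ hab _ hp => hab.trans hp

variable {S : Set (Set (ℝ × ℝ))}

theorem halfplane_eq_of_isAntichain (hS : IsAntichain (· ⊆ ·) S) {v : ℝ × ℝ} {a b : ℝ}
    (ha : halfplane v a ∈ S) (hb : halfplane v b ∈ S) : halfplane v a = halfplane v b := by
  obtain hab | hba := le_total a b
  · exact (hS.eq hb ha (halfplane_antitone v hab)).symm
  · exact hS.eq ha hb (halfplane_antitone v hba)

theorem exists_forall_halfplane_mem_inner_pos (hcov : ⋃₀ S ≠ Set.univ) (hint : (⋂₀ S).Nonempty) :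
    ∃ d : ℝ × ℝ, ∀ v c, halfplane v c ∈ S → 0 < v.1 * d.1 + v.2 * d.2 := by
  obtain ⟨q, hq⟩ := (Set.ne_univ_iff_exists_notMem _).1 hcov
  obtain ⟨p, hp⟩ := hint
  refine ⟨p - q, fun v c hvc => ?_⟩
  have hpc : c ≤ v.1 * p.1 + v.2 * p.2 := hp _ hvc
  have hqc : v.1 * q.1 + v.2 * q.2 < c := not_le.1 fun h => hq ⟨_, hvc, h⟩
  simp only [Prod.fst_sub, Prod.snd_sub]
  linarith

end Halfplane

section Angle

open Real
open Complex (equivRealProd)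

theorem arg_div_eq_sub {x y : ℂ} (hx : x ≠ 0) (hy : y ≠ 0)
    (h : x.arg - y.arg ∈ Set.Ioc (-π) π) : (x / y).arg = x.arg - y.arg := by
  rw [← Complex.arg_coe_angle_toReal_eq_arg, Complex.arg_div_coe_angle hx hy, ← Angle.coe_sub,
    Angle.toReal_coe_eq_self_iff_mem_Ioc.2 h]

/-- The clockwise angle from `u` to `v`, normalised to `(-π, π]` instead of the range `[0, 2π)` of
`ang`, so that the vectors `v` with `⟨v, d⟩ > 0` are ordered by their angle from `d`. It is `0` if
`u = 0` or `v = 0`. -/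
noncomputable def signedAng (u v : ℝ × ℝ) : ℝ :=
  (equivRealProd.symm u / equivRealProd.symm v).arg

theorem ang_of_signedAng_nonneg {u v : ℝ × ℝ} (h : 0 ≤ signedAng u v) :
    ang u v = signedAng u v := by
  simp only [signedAng, Complex.equivRealProd_symm_apply] at h ⊢
  exact if_neg h.not_gt

theorem equivRealProd_symm_ne_zero {u : ℝ × ℝ} (hu : u ≠ 0) : equivRealProd.symm u ≠ 0 :=
  fun h => hu (equivRealProd.symm.injective h)

theorem eq_of_signedAng_eq {d u v : ℝ × ℝ} (hd : d ≠ 0)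
    (hnorm : u.1 ^ 2 + u.2 ^ 2 = v.1 ^ 2 + v.2 ^ 2) (h : signedAng d u = signedAng d v) :
    u = v := by
  have hnorm' : ‖equivRealProd.symm u‖ = ‖equivRealProd.symm v‖ := by
    simp only [Complex.norm_eq_sqrt_sq_add_sq]
    exact congrArg sqrt hnorm
  have hdiv : equivRealProd.symm d / equivRealProd.symm u =
      equivRealProd.symm d / equivRealProd.symm v :=
    Complex.ext_norm_arg (by rw [norm_div, norm_div, hnorm']) h
  rw [div_eq_mul_inv, div_eq_mul_inv] at hdiv
  exact equivRealProd.symm.injective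
    (inv_injective (mul_left_cancel₀ (equivRealProd_symm_ne_zero hd) hdiv))

variable {d u v w : ℝ × ℝ}

theorem abs_signedAng_lt_pi_div_two (hv : 0 < v.1 * d.1 + v.2 * d.2) :
    |signedAng d v| < π / 2 := by
  have hv0 : v ≠ 0 := by rintro rfl; simp at hv
  have hre : (equivRealProd.symm d / equivRealProd.symm v).re =
      (v.1 * d.1 + v.2 * d.2) / Complex.normSq (equivRealProd.symm v) := by
    rw [Complex.div_re, ← add_div, mul_comm v.1, mul_comm v.2]
    rfl
  refine Complex.abs_arg_lt_pi_div_two_iff.2 (Or.inl ?_)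
  rw [hre]
  exact div_pos hv (Complex.normSq_pos.2 (equivRealProd_symm_ne_zero hv0))

theorem signedAng_sub_signedAng_lt_pi (hu : 0 < u.1 * d.1 + u.2 * d.2)
    (hv : 0 < v.1 * d.1 + v.2 * d.2) : signedAng d v - signedAng d u < π := by
  linarith [(abs_lt.1 (abs_signedAng_lt_pi_div_two hu)).1,
    (abs_lt.1 (abs_signedAng_lt_pi_div_two hv)).2]

theorem signedAng_eq_sub (hu : 0 < u.1 * d.1 + u.2 * d.2) (hv : 0 < v.1 * d.1 + v.2 * d.2) :
    signedAng u v = signedAng d v - signedAng d u := by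
  have hd0 : d ≠ 0 := by rintro rfl; simp at hu
  have hu0 : u ≠ 0 := by rintro rfl; simp at hu
  have hv0 : v ≠ 0 := by rintro rfl; simp at hv
  have hdC := equivRealProd_symm_ne_zero hd0
  have huC := equivRealProd_symm_ne_zero hu0
  have hvC := equivRealProd_symm_ne_zero hv0
  have hrange : signedAng d v - signedAng d u ∈ Set.Ioc (-π) π :=
    ⟨by linarith [signedAng_sub_signedAng_lt_pi hv hu], (signedAng_sub_signedAng_lt_pi hu hv).le⟩
  have hdiv : signedAng u v = ((equivRealProd.symm d / equivRealProd.symm v) /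
      (equivRealProd.symm d / equivRealProd.symm u)).arg := by
    rw [div_div_div_cancel_left' _ _ hdC, signedAng]
  rw [hdiv]
  exact arg_div_eq_sub (div_ne_zero hdC hvC) (div_ne_zero hdC huC) hrange

theorem ang_eq_signedAng_sub (hu : 0 < u.1 * d.1 + u.2 * d.2) (hv : 0 < v.1 * d.1 + v.2 * d.2)
    (huv : signedAng d u ≤ signedAng d v) : ang u v = signedAng d v - signedAng d u := by
  have h := signedAng_eq_sub hu hv
  rw [ang_of_signedAng_nonneg (h ▸ sub_nonneg.2 huv), h]

theorem ang_mem_Ioo_of_signedAng_lt (hu : 0 < u.1 * d.1 + u.2 * d.2)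
    (hv : 0 < v.1 * d.1 + v.2 * d.2) (huv : signedAng d u < signedAng d v) :
    ang u v ∈ Set.Ioo 0 π := by
  rw [ang_eq_signedAng_sub hu hv huv.le]
  exact ⟨sub_pos.2 huv, signedAng_sub_signedAng_lt_pi hu hv⟩

theorem ang_lt_ang_of_signedAng_lt (hu : 0 < u.1 * d.1 + u.2 * d.2)
    (hv : 0 < v.1 * d.1 + v.2 * d.2) (hw : 0 < w.1 * d.1 + w.2 * d.2)
    (huv : signedAng d u ≤ signedAng d v) (hvw : signedAng d v < signedAng d w) :
    ang u v < ang u w := by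
  rw [ang_eq_signedAng_sub hu hv huv, ang_eq_signedAng_sub hu hw (huv.trans hvw.le)]
  exact sub_lt_sub_right hvw _

theorem injOn_signedAng_of_isAntichain {S : Set (Set (ℝ × ℝ))} (hS : IsAntichain (· ⊆ ·) S)
    {v : Set (ℝ × ℝ) → ℝ × ℝ} {c : Set (ℝ × ℝ) → ℝ}
    (hunit : ∀ H ∈ S, (v H).1 ^ 2 + (v H).2 ^ 2 = 1) (hrepr : ∀ H ∈ S, H = halfplane (v H) (c H))
    (hd : d ≠ 0) : Set.InjOn (fun H => signedAng d (v H)) S := by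
  intro H hH K hK hHK
  have hv : v H = v K := eq_of_signedAng_eq hd ((hunit H hH).trans (hunit K hK).symm) hHK
  have hH' : H = halfplane (v K) (c H) := hv ▸ hrepr H hH
  have hK' : K = halfplane (v K) (c K) := hrepr K hK
  calc H = halfplane (v K) (c H) := hH'
    _ = halfplane (v K) (c K) :=
      halfplane_eq_of_isAntichain hS (Set.mem_of_eq_of_mem hH'.symm hH)
        (Set.mem_of_eq_of_mem hK'.symm hK)
    _ = K := hK'.symm

end Angle

theorem stmt7_general (R : Finset (Set (ℝ × ℝ))) (hhp : ∀ H ∈ R, IsHalfplane H)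
    (hne : R.Nonempty) (hanti : IsAntichain (· ⊆ ·) (R : Set (Set (ℝ × ℝ))))
    (hcov : ⋃₀ (R : Set (Set (ℝ × ℝ))) ≠ Set.univ)
    (hint : (⋂₀ (R : Set (Set (ℝ × ℝ)))).Nonempty) :
    ∃ (t : ℕ) (ht : 0 < t) (v : Fin t → ℝ × ℝ) (c : Fin t → ℝ),
      t = R.card ∧
      (∀ i : Fin t, (v i).1 ^ 2 + (v i).2 ^ 2 = 1) ∧
      Function.Injective (fun i : Fin t => halfplane (v i) (c i)) ∧
      (R : Set (Set (ℝ × ℝ))) = Set.range (fun i : Fin t => halfplane (v i) (c i)) ∧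
      (∀ i : Fin t, 0 < i.val →
        0 < ang (v ⟨0, ht⟩) (v i) ∧ ang (v ⟨0, ht⟩) (v i) < Real.pi) ∧
      (∀ i j : Fin t, 0 < i.val → i < j →
        ang (v ⟨0, ht⟩) (v i) < ang (v ⟨0, ht⟩) (v j)) := by
  choose! v c hunit hrepr using hhp
  obtain ⟨d, hd⟩ := exists_forall_halfplane_mem_inner_pos hcov hint
  have hpos : ∀ H ∈ R, 0 < (v H).1 * d.1 + (v H).2 * d.2 :=
    fun H hH => hd _ _ (Set.mem_of_eq_of_mem (hrepr H hH).symm hH)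
  have hd0 : d ≠ 0 := by
    obtain ⟨H, hH⟩ := hne
    rintro rfl
    simpa using hpos H hH
  obtain ⟨g, hrange, hmono⟩ :=
    exists_strictMono_comp_range_eq R (injOn_signedAng_of_isAntichain hanti hunit hrepr hd0)
  have hgR : ∀ i, g i ∈ R := fun i => Finset.mem_coe.1 (hrange ▸ Set.mem_range_self i)
  have hposg : ∀ i, 0 < (v (g i)).1 * d.1 + (v (g i)).2 * d.2 := fun i => hpos _ (hgR i)
  have hg : (fun i => halfplane (v (g i)) (c (g i))) = g := funext fun i => (hrepr _ (hgR i)).symm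
  refine ⟨R.card, hne.card_pos, v ∘ g, c ∘ g, rfl, fun i => hunit _ (hgR i), ?_, ?_, ?_, ?_⟩
  · exact hg.symm ▸ hmono.injective.of_comp
  · exact hrange.symm.trans (congrArg Set.range hg.symm)
  · exact fun i hi => ang_mem_Ioo_of_signedAng_lt (hposg _) (hposg i) (hmono hi)
  · exact fun i j hi hij =>
      ang_lt_ang_of_signedAng_lt (hposg _) (hposg i) (hposg j) (hmono.monotone hi.le) (hmono hij)

theorem stmt7 (R : Finset (Set (ℝ × ℝ))) (hhp : ∀ H ∈ R, IsHalfplane H)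
    (hne : R.Nonempty) (hirr : IrreducibleFam R)
    (hcov : ⋃₀ (R : Set (Set (ℝ × ℝ))) ≠ Set.univ)
    (hint : (⋂₀ (R : Set (Set (ℝ × ℝ)))).Nonempty) :
    ∃ (t : ℕ) (ht : 0 < t) (v : Fin t → ℝ × ℝ) (c : Fin t → ℝ),
      t = R.card ∧
      (∀ i : Fin t, (v i).1 ^ 2 + (v i).2 ^ 2 = 1) ∧
      Function.Injective (fun i : Fin t => halfplane (v i) (c i)) ∧
      (R : Set (Set (ℝ × ℝ))) = Set.range (fun i : Fin t => halfplane (v i) (c i)) ∧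
      (∀ i : Fin t, 0 < i.val →
        0 < ang (v ⟨0, ht⟩) (v i) ∧ ang (v ⟨0, ht⟩) (v i) < Real.pi) ∧
      (∀ i j : Fin t, 0 < i.val → i < j →
        ang (v ⟨0, ht⟩) (v i) < ang (v ⟨0, ht⟩) (v j)) := by
  exact stmt7_general R hhp hne hirr.isAntichain hcov hint
end

section
/- Let H_1, …, H_t (t ≥ 2) be halfplanes such that 0 < ang(H_1, H_2) < ang(H_1, H_3) < ⋯ < ang(H_1, H_t) ≤ π. If H_1 ∪ H_t ≠ ℝ², then neither H_1 nor H_t is redundant in {H_1, …, H_t}; that is, ⋃_{i=2}^{t} H_i ≠ ⋃_{i=1}^{t} H_i and ⋃_{i=1}^{t-1} H_i ≠ ⋃_{i=1}^{t} H_i. -/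
open scoped Classical

/-!
Let `u` be the normal of `H₁` and `d` its counterclockwise quarter turn, a direction of the boundary
line of `H₁`. Every other normal lies at a clockwise angle in `(0, π]` from `u`, so it has negative
inner product with `d`, or it is `-u` up to scale. Hence the point `a • u + b • d` with `a` large,
and then `b` large depending on `a`, lies in `H₁` and in no other halfplane. Clockwise angles to
the normal of `H_t` from the other normals also lie in `(0, π]`, because
`ang v w = ang u w - ang u v`, and the mirror image of the same argument applies to `H_t`.
-/

open Filter
open Complex (equivRealProdCLM)
open scoped Real

lemma biUnion_ne_iUnion_of_mem {ι α : Type*} {s : ι → Set α} {S : Set ι} {p : α} {k : ι}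
    (hp : p ∈ s k) (hS : ∀ i ∈ S, p ∉ s i) : ⋃ i ∈ S, s i ≠ ⋃ i, s i := by
  intro heq
  obtain ⟨i, hi, hpi⟩ := Set.mem_iUnion₂.1 (heq ▸ Set.mem_iUnion_of_mem k hp)
  exact hS i hi hpi

lemma eventually_eventually_lt_mul_add_mul {𝕜 : Type*} [Field 𝕜] [LinearOrder 𝕜]
    [IsStrictOrderedRing 𝕜] {x y : 𝕜} (c : 𝕜) (h : 0 < y ∨ y = 0 ∧ 0 < x) :
    ∀ᶠ a in atTop, ∀ᶠ b in atTop, c < a * x + b * y := by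
  rcases h with hy | ⟨rfl, hx⟩
  · exact .of_forall fun a => (tendsto_atTop_add_const_left atTop (a * x)
      (tendsto_id.atTop_mul_const hy)).eventually_gt_atTop c
  · filter_upwards [(tendsto_id.atTop_mul_const hx).eventually_gt_atTop c] with a ha
    exact .of_forall fun b => by simpa using ha

lemma arg_pos_iff {z : ℂ} : 0 < Complex.arg z ↔ 0 < z.im ∨ z.im = 0 ∧ z.re < 0 := by
  rw [lt_iff_le_and_ne', Complex.arg_nonneg_iff, ne_eq, Complex.arg_eq_zero_iff, le_iff_lt_or_eq]
  grind

lemma strictMono_of_zero_lt_one_of_pos {α : Type*} [Preorder α] {t : ℕ} (ht : 2 ≤ t)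
    {f : Fin t → α} (h01 : f ⟨0, Nat.zero_lt_of_lt ht⟩ < f ⟨1, ht⟩)
    (hmono : ∀ i j : Fin t, 0 < i.val → i < j → f i < f j) : StrictMono f := by
  intro i j hij
  rcases Nat.eq_zero_or_pos i.val with hi | hi
  · have hfi : f i = f ⟨0, Nat.zero_lt_of_lt ht⟩ := congrArg f (Fin.ext hi)
    rcases (Nat.one_le_of_lt hij).eq_or_lt with hj | hj
    · have hfj : f ⟨1, ht⟩ = f j := congrArg f (Fin.ext hj)
      exact hfi.trans_lt (h01.trans_eq hfj)
    · exact hfi.trans_lt (h01.trans (hmono _ j Nat.one_pos hj))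
  · exact hmono i j hi hij

section Plane

/-- The standard inner product of the plane `ℝ × ℝ`, which carries no such structure in Mathlib;
`halfplane v c` is the set of `p` with `c ≤ dot v p`. -/
def dot (u p : ℝ × ℝ) : ℝ := u.1 * p.1 + u.2 * p.2

/-- The counterclockwise quarter turn of a vector, which directs the boundary line of the
halfplanes with normal `u`. -/
def perp (u : ℝ × ℝ) : ℝ × ℝ := (-u.2, u.1)

variable (u v p q : ℝ × ℝ)

lemma dot_smul_add_smul (a b : ℝ) : dot u (a • p + b • q) = a * dot u p + b * dot u q := by
  simp only [dot, Prod.fst_add, Prod.snd_add, Prod.smul_fst, Prod.smul_snd, smul_eq_mul]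
  ring

lemma dot_comm : dot u v = dot v u := by
  simp only [dot, mul_comm]

lemma dot_neg_perp_comm : dot u (-perp v) = dot v (perp u) := by
  simp only [dot, perp, Prod.fst_neg, Prod.snd_neg]
  ring

lemma dot_perp_self : dot u (perp u) = 0 := by
  simp only [dot, perp]
  ring

variable {u v}

lemma dot_self_pos (hu : u ≠ 0) : 0 < dot u u := by
  have h : u.1 ≠ 0 ∨ u.2 ≠ 0 := not_and_or.1 fun h => hu (Prod.ext h.1 h.2)
  rw [dot]
  rcases h with h | h
  · exact add_pos_of_pos_of_nonneg (mul_self_pos.2 h) (mul_self_nonneg _)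
  · exact add_pos_of_nonneg_of_pos (mul_self_nonneg _) (mul_self_pos.2 h)

end Plane

section Ang

variable {u v w : ℝ × ℝ}

lemma ang_eq_toIcoMod (u v : ℝ × ℝ) :
    ang u v = toIcoMod Real.two_pi_pos 0
      (Complex.arg (equivRealProdCLM.symm u / equivRealProdCLM.symm v)) := by
  rw [eq_comm, toIcoMod_eq_iff, Complex.equivRealProdCLM_symm_apply,
    Complex.equivRealProdCLM_symm_apply]
  simp only [ang]
  set a := Complex.arg ((u.1 + u.2 * Complex.I) / (v.1 + v.2 * Complex.I))
  have ha_gt : -π < a := Complex.neg_pi_lt_arg _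
  have ha_le : a ≤ π := Complex.arg_le_pi _
  split_ifs with h
  · exact ⟨⟨by linarith, by linarith⟩, -1, by simp⟩
  · exact ⟨⟨by linarith, by linarith⟩, 0, by simp⟩

lemma ang_mem_Ico (u v : ℝ × ℝ) : ang u v ∈ Set.Ico 0 (2 * π) := by
  simpa only [ang_eq_toIcoMod, zero_add] using toIcoMod_mem_Ico Real.two_pi_pos 0 _

lemma ang_self (u : ℝ × ℝ) : ang u u = 0 := by
  simp only [ang]
  by_cases h : (u.1 + u.2 * Complex.I : ℂ) = 0 <;> simp [h]

lemma ne_zero_of_ang_pos (h : 0 < ang u v) : u ≠ 0 ∧ v ≠ 0 := by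
  constructor <;> rintro rfl <;> simp [ang] at h

lemma coe_ang (hu : u ≠ 0) (hv : v ≠ 0) :
    (ang u v : Real.Angle) = Complex.arg (equivRealProdCLM.symm u) -
      Complex.arg (equivRealProdCLM.symm v) := by
  rw [ang_eq_toIcoMod, Real.Angle.coe_toIcoMod, Complex.arg_div_coe_angle] <;> simpa

lemma ang_eq_sub_of_le (hu : u ≠ 0) (hv : v ≠ 0) (hw : w ≠ 0) (h : ang u v ≤ ang u w) :
    ang v w = ang u w - ang u v := by
  have hcoe : (ang v w : Real.Angle) = (ang u w - ang u v : ℝ) := by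
    rw [Real.Angle.coe_sub, coe_ang hu hv, coe_ang hu hw, coe_ang hv hw]
    abel
  have hmem : ang u w - ang u v ∈ Set.Ico 0 (2 * π) :=
    ⟨sub_nonneg.2 h, by linarith [(ang_mem_Ico u v).1, (ang_mem_Ico u w).2]⟩
  have : Fact (0 < 2 * π) := ⟨Real.two_pi_pos⟩
  refine (AddCircle.coe_eq_coe_iff_of_mem_Ico (a := 0) ?_ ?_).1 hcoe
  · rw [zero_add]
    exact ang_mem_Ico v w
  · rwa [zero_add]

lemma ang_mem_Ioc_of_lt_of_le_pi (hv : v ≠ 0) (hlt : ang u v < ang u w)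
    (hle : ang u w ≤ π) : ang v w ∈ Set.Ioc 0 π := by
  have hnonneg : 0 ≤ ang u v := (ang_mem_Ico u v).1
  obtain ⟨hu, hw⟩ := ne_zero_of_ang_pos (hnonneg.trans_lt hlt)
  rw [ang_eq_sub_of_le hu hv hw hlt.le]
  exact ⟨sub_pos.2 hlt, (sub_le_self _ hnonneg).trans hle⟩

lemma ang_eq_arg_of_le_pi (h : ang u v ≤ π) :
    ang u v =
      Complex.arg (equivRealProdCLM.symm u / equivRealProdCLM.symm v) := by
  rw [Complex.equivRealProdCLM_symm_apply, Complex.equivRealProdCLM_symm_apply]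
  simp only [ang] at h ⊢
  split_ifs at h ⊢
  · linarith [Complex.neg_pi_lt_arg ((u.1 + u.2 * Complex.I) / (v.1 + v.2 * Complex.I))]
  · rfl

lemma equivRealProdCLM_symm_div (u v : ℝ × ℝ) :
    equivRealProdCLM.symm u / equivRealProdCLM.symm v =
      ⟨dot v u / dot v v, -dot v (perp u) / dot v v⟩ := by
  apply Complex.ext <;>
    simp only [Complex.div_re, Complex.div_im, Complex.normSq_apply, dot, perp,
      Complex.equivRealProdCLM_symm_apply_re, Complex.equivRealProdCLM_symm_apply_im] <;>
    ring

lemma dot_perp_neg_or_of_ang_mem_Ioc (h : ang u v ∈ Set.Ioc 0 π) :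
    dot v (perp u) < 0 ∨ dot v (perp u) = 0 ∧ dot v u < 0 := by
  have hv : 0 < dot v v := dot_self_pos (ne_zero_of_ang_pos h.1).2
  have harg := h.1
  rw [ang_eq_arg_of_le_pi h.2, equivRealProdCLM_symm_div, arg_pos_iff] at harg
  simpa only [div_pos_iff_of_pos_right hv, neg_pos, div_eq_zero_iff, neg_eq_zero, hv.ne', or_false,
    div_lt_iff₀ hv, zero_mul] using harg

end Ang

section Halfplanes

variable {ι : Type*} [Finite ι] {v : ι → ℝ × ℝ} (c : ι → ℝ) {k : ι} {d : ℝ × ℝ}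

lemma exists_mem_halfplane_forall_notMem (hk : v k ≠ 0) (hd : dot (v k) d = 0)
    (h : ∀ i ≠ k, dot (v i) d < 0 ∨ dot (v i) d = 0 ∧ dot (v i) (v k) < 0) :
    ∃ p ∈ halfplane (v k) (c k), ∀ i ≠ k, p ∉ halfplane (v i) (c i) := by
  have hmem : ∀ᶠ a in atTop, ∀ᶠ b in atTop, c k < a * dot (v k) (v k) + b * dot (v k) d :=
    eventually_eventually_lt_mul_add_mul (c k) (.inr ⟨hd, dot_self_pos hk⟩)
  have hnotMem : ∀ i ≠ k, ∀ᶠ a in atTop, ∀ᶠ b in atTop,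
      -c i < a * -dot (v i) (v k) + b * -dot (v i) d := fun i hi =>
    eventually_eventually_lt_mul_add_mul (-c i) (by simpa using h i hi)
  obtain ⟨a, hak, ha⟩ :=
    (hmem.and (eventually_all.2 fun i => eventually_imp_distrib_left.2 (hnotMem i))).exists
  obtain ⟨b, hbk, hb⟩ :=
    (hak.and (eventually_all.2 fun i => eventually_imp_distrib_left.2 (ha i))).exists
  rw [← dot_smul_add_smul] at hbk
  refine ⟨a • v k + b • d, hbk.le, fun i hi hle => ?_⟩
  have hlt := hb i hi
  rw [mul_neg, mul_neg, ← neg_add, neg_lt_neg_iff, ← dot_smul_add_smul] at hlt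
  exact hlt.not_ge hle

lemma exists_mem_halfplane_forall_notMem_of_ang_mem_Ioc_left (hk : v k ≠ 0)
    (h : ∀ i ≠ k, ang (v k) (v i) ∈ Set.Ioc 0 π) :
    ∃ p ∈ halfplane (v k) (c k), ∀ i ≠ k, p ∉ halfplane (v i) (c i) :=
  exists_mem_halfplane_forall_notMem c hk (dot_perp_self (v k)) fun i hi =>
    dot_perp_neg_or_of_ang_mem_Ioc (h i hi)

lemma exists_mem_halfplane_forall_notMem_of_ang_mem_Ioc_right (hk : v k ≠ 0)
    (h : ∀ i ≠ k, ang (v i) (v k) ∈ Set.Ioc 0 π) :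
    ∃ p ∈ halfplane (v k) (c k), ∀ i ≠ k, p ∉ halfplane (v i) (c i) := by
  refine exists_mem_halfplane_forall_notMem c (d := -perp (v k)) hk ?_ fun i hi => ?_
  · rw [dot_neg_perp_comm, dot_perp_self]
  · rw [dot_neg_perp_comm, dot_comm (v i) (v k)]
    exact dot_perp_neg_or_of_ang_mem_Ioc (h i hi)

end Halfplanes

theorem stmt8_general (t : ℕ) (ht : 2 ≤ t) (v : Fin t → ℝ × ℝ) (c : Fin t → ℝ)
    (hpos : 0 < ang (v ⟨0, Nat.zero_lt_of_lt ht⟩) (v ⟨1, ht⟩))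
    (hmono : ∀ i j : Fin t, 0 < i.val → i < j →
      ang (v ⟨0, Nat.zero_lt_of_lt ht⟩) (v i) < ang (v ⟨0, Nat.zero_lt_of_lt ht⟩) (v j))
    (hle : ang (v ⟨0, Nat.zero_lt_of_lt ht⟩) (v ⟨t - 1, Nat.sub_one_lt_of_lt ht⟩) ≤ π) :
    (⋃ i ∈ {i : Fin t | i.val ≠ 0}, halfplane (v i) (c i)) ≠
      (⋃ i : Fin t, halfplane (v i) (c i)) ∧
    (⋃ i ∈ {i : Fin t | i.val ≠ t - 1}, halfplane (v i) (c i)) ≠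
      (⋃ i : Fin t, halfplane (v i) (c i)) := by
  set first : Fin t := ⟨0, Nat.zero_lt_of_lt ht⟩
  set last : Fin t := ⟨t - 1, Nat.sub_one_lt_of_lt ht⟩
  have hmono_ang : StrictMono fun i => ang (v first) (v i) :=
    strictMono_of_zero_lt_one_of_pos ht ((ang_self (v first)).trans_lt hpos) hmono
  have hfirst : ∀ i ≠ first, first < i := fun i hi =>
    Nat.pos_of_ne_zero (Fin.val_ne_of_ne hi)
  have hlast : ∀ i, i ≤ last := fun i => Nat.le_sub_one_of_lt i.isLt
  have hang : ∀ i ≠ first, ang (v first) (v i) ∈ Set.Ioc 0 π := fun i hi =>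
    ⟨by simpa only [ang_self] using hmono_ang (hfirst i hi),
      (hmono_ang.monotone (hlast i)).trans hle⟩
  have hne : ∀ i, v i ≠ 0 := fun i => by
    rcases eq_or_ne i first with rfl | hi
    · exact (ne_zero_of_ang_pos hpos).1
    · exact (ne_zero_of_ang_pos (hang i hi).1).2
  constructor
  · obtain ⟨p, hp, hp'⟩ :=
      exists_mem_halfplane_forall_notMem_of_ang_mem_Ioc_left c (hne first) hang
    exact biUnion_ne_iUnion_of_mem hp fun i hi => hp' i (Fin.ne_of_val_ne hi)
  · obtain ⟨p, hp, hp'⟩ :=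
      exists_mem_halfplane_forall_notMem_of_ang_mem_Ioc_right c (hne last) fun i hi =>
        ang_mem_Ioc_of_lt_of_le_pi (hne i) (hmono_ang ((hlast i).lt_of_ne hi)) hle
    exact biUnion_ne_iUnion_of_mem hp fun i hi => hp' i (Fin.ne_of_val_ne hi)

theorem stmt8 (t : ℕ) (ht : 2 ≤ t) (v : Fin t → ℝ × ℝ) (c : Fin t → ℝ)
    (hunit : ∀ i : Fin t, (v i).1 ^ 2 + (v i).2 ^ 2 = 1)
    (hpos : 0 < ang (v ⟨0, by omega⟩) (v ⟨1, by omega⟩))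
    (hmono : ∀ i j : Fin t, 0 < i.val → i < j →
      ang (v ⟨0, by omega⟩) (v i) < ang (v ⟨0, by omega⟩) (v j))
    (hle : ang (v ⟨0, by omega⟩) (v ⟨t - 1, by omega⟩) ≤ Real.pi)
    (hcup : halfplane (v ⟨0, by omega⟩) (c ⟨0, by omega⟩) ∪
        halfplane (v ⟨t - 1, by omega⟩) (c ⟨t - 1, by omega⟩) ≠ Set.univ) :
    (⋃ i ∈ {i : Fin t | i.val ≠ 0}, halfplane (v i) (c i)) ≠
      (⋃ i : Fin t, halfplane (v i) (c i)) ∧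
    (⋃ i ∈ {i : Fin t | i.val ≠ t - 1}, halfplane (v i) (c i)) ≠
      (⋃ i : Fin t, halfplane (v i) (c i)) :=
  stmt8_general t ht v c hpos hmono hle
end

section
/- Let Δ > 0, let S and S' be finite sets of points contained in the open square (−Δ, Δ)², let k ≥ 0 be an integer, and let ℋ be a finite family of halfplanes that contains the four halfplanes {(x, y) : y ≤ −Δ}, {(x, y) : y ≥ Δ}, {(x, y) : x ≤ −Δ}, and {(x, y) : x ≥ Δ}. If there exists a set cover 𝒵 ⊆ ℋ of S with memb(S', 𝒵) ≤ k, then there exists a set cover 𝒵'' ⊆ ℋ of S with memb(S', 𝒵'') ≤ k such that either ⋃𝒵'' = ℝ², or 𝒵'' is regular (i.e., irreducible and its complement region is nonempty and bounded). -/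
open scoped Classical

/-- The complement region of a finite family of halfplanes: the closure of the
complement of its union. -/
def complementRegion (R : Finset (Set (ℝ × ℝ))) : Set (ℝ × ℝ) :=
  closure ((⋃₀ (R : Set (Set (ℝ × ℝ))))ᶜ)

/-- A finite family of halfplanes is regular if it is irreducible and its complement
region is nonempty and bounded. -/
def RegularFam (R : Finset (Set (ℝ × ℝ))) : Prop :=
  IrreducibleFam R ∧ (complementRegion R).Nonempty ∧
    Bornology.IsBounded (complementRegion R)

/-!
Add to the given cover the sides of a box around the points of `S'`: no point of `S'` lies in a
side, so its membership is unchanged, and the union now leaves only a bounded set uncovered.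
A minimal subfamily with the same union is irreducible, still covers `S`, and has no larger
membership; its complement region is nonempty unless it covers the whole plane.
-/

theorem isCover_iff_subset_sUnion {S : Finset (ℝ × ℝ)} {F : Finset (Set (ℝ × ℝ))} :
    IsCover S F ↔ (S : Set (ℝ × ℝ)) ⊆ ⋃₀ (F : Set (Set (ℝ × ℝ))) :=
  Iff.rfl

section Membership

variable {p : ℝ × ℝ} {S : Finset (ℝ × ℝ)} {F G : Finset (Set (ℝ × ℝ))}

theorem memb_mono_s10 (h : F ⊆ G) : memb p F ≤ memb p G :=
  Finset.card_le_card (Finset.filter_subset_filter _ h)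

theorem membS_mono_s10 (h : F ⊆ G) : membS S F ≤ membS S G :=
  Finset.sup_mono_fun fun _ _ => memb_mono_s10 h

theorem memb_union_of_notMem_sUnion (h : p ∉ ⋃₀ (G : Set (Set (ℝ × ℝ)))) :
    memb p (F ∪ G) = memb p F := by
  have hG : G.filter (p ∈ ·) = ∅ :=
    Finset.filter_eq_empty_iff.2 fun R hR hp => h ⟨R, hR, hp⟩
  rw [memb, Finset.filter_union, hG, Finset.union_empty, memb]

theorem membS_union_of_disjoint (h : Disjoint (S : Set (ℝ × ℝ)) (⋃₀ (G : Set (Set (ℝ × ℝ))))) :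
    membS S (F ∪ G) = membS S F :=
  Finset.sup_congr rfl fun _ hp => memb_union_of_notMem_sUnion (Set.disjoint_left.1 h hp)

end Membership

section Irreducible

variable {F : Finset (Set (ℝ × ℝ))}

theorem irreducibleFam_of_minimal {U : Set (ℝ × ℝ)}
    (h : Minimal (fun G : Finset (Set (ℝ × ℝ)) => ⋃₀ (G : Set (Set (ℝ × ℝ))) = U) F) :
    IrreducibleFam F := by
  intro R hR hred
  have hsub : F ⊆ F.erase R := h.le_of_le (hred.symm.trans h.prop) (F.erase_subset R)
  exact Finset.notMem_erase R F (hsub hR)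

theorem exists_irreducibleFam_subset_sUnion_eq (F : Finset (Set (ℝ × ℝ))) :
    ∃ G ⊆ F, IrreducibleFam G ∧
      ⋃₀ (G : Set (Set (ℝ × ℝ))) = ⋃₀ (F : Set (Set (ℝ × ℝ))) := by
  obtain ⟨G, hGF, hG⟩ := exists_minimal_le_of_wellFoundedLT
    (fun G : Finset (Set (ℝ × ℝ)) => ⋃₀ (G : Set (Set (ℝ × ℝ))) = ⋃₀ (F : Set (Set (ℝ × ℝ)))) F rfl
  exact ⟨G, hGF, irreducibleFam_of_minimal hG, hG.prop⟩

end Irreducible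

section ComplementRegion

variable {F G : Finset (Set (ℝ × ℝ))}

theorem complementRegion_nonempty_iff :
    (complementRegion F).Nonempty ↔ ⋃₀ (F : Set (Set (ℝ × ℝ))) ≠ Set.univ := by
  rw [complementRegion, closure_nonempty_iff, Set.nonempty_compl]

theorem complementRegion_anti
    (h : ⋃₀ (F : Set (Set (ℝ × ℝ))) ⊆ ⋃₀ (G : Set (Set (ℝ × ℝ)))) :
    complementRegion G ⊆ complementRegion F :=
  closure_mono (Set.compl_subset_compl.2 h)

theorem IrreducibleFam.sUnion_eq_univ_or_regularFam (hF : IrreducibleFam F)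
    (hbdd : Bornology.IsBounded (complementRegion F)) :
    ⋃₀ (F : Set (Set (ℝ × ℝ))) = Set.univ ∨ RegularFam F :=
  or_iff_not_imp_left.2 fun hne => ⟨hF, complementRegion_nonempty_iff.2 hne, hbdd⟩

end ComplementRegion

section BoxSides

/-- The four closed halfplanes beyond the sides of the square `(-Δ, Δ)²`: a family that makes the
complement region bounded without meeting the open square. -/
noncomputable def boxSides (Δ : ℝ) : Finset (Set (ℝ × ℝ)) :=
  {{p | p.2 ≤ -Δ}, {p | Δ ≤ p.2}, {p | p.1 ≤ -Δ}, {p | Δ ≤ p.1}}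

variable {Δ : ℝ}

theorem boxSides_subset_iff {F : Finset (Set (ℝ × ℝ))} :
    boxSides Δ ⊆ F ↔ {p | p.2 ≤ -Δ} ∈ F ∧ {p | Δ ≤ p.2} ∈ F ∧ {p | p.1 ≤ -Δ} ∈ F ∧
      {p | Δ ≤ p.1} ∈ F := by
  simp only [boxSides, Finset.insert_subset_iff, Finset.singleton_subset_iff]

theorem notMem_sUnion_boxSides_iff {p : ℝ × ℝ} :
    p ∉ ⋃₀ (boxSides Δ : Set (Set (ℝ × ℝ))) ↔ -Δ < p.1 ∧ p.1 < Δ ∧ -Δ < p.2 ∧ p.2 < Δ := by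
  simp only [boxSides, Finset.coe_insert, Finset.coe_singleton, Set.sUnion_insert,
    Set.sUnion_singleton, Set.mem_union, Set.mem_ofPred_eq, not_or, not_le]
  tauto

theorem disjoint_sUnion_boxSides_iff {S : Set (ℝ × ℝ)} :
    Disjoint S (⋃₀ (boxSides Δ : Set (Set (ℝ × ℝ)))) ↔
      ∀ p ∈ S, -Δ < p.1 ∧ p.1 < Δ ∧ -Δ < p.2 ∧ p.2 < Δ := by
  simp only [Set.disjoint_left, notMem_sUnion_boxSides_iff]

theorem isBounded_complementRegion_boxSides :
    Bornology.IsBounded (complementRegion (boxSides Δ)) := by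
  refine ((Metric.isBounded_Icc (-Δ, -Δ) (Δ, Δ)).subset fun p hp => ?_).closure
  obtain ⟨hl, hr, hb, ht⟩ := notMem_sUnion_boxSides_iff.1 hp
  exact ⟨⟨hl.le, hb.le⟩, ⟨hr.le, ht.le⟩⟩

end BoxSides

theorem stmt10_general (S S' : Finset (ℝ × ℝ)) (k : ℕ) (H B : Finset (Set (ℝ × ℝ))) (hBH : B ⊆ H)
    (hBS' : Disjoint (S' : Set (ℝ × ℝ)) (⋃₀ (B : Set (Set (ℝ × ℝ)))))
    (hB : Bornology.IsBounded (complementRegion B))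
    (hex : ∃ Z ⊆ H, IsCover S Z ∧ membS S' Z ≤ k) :
    ∃ Z'' ⊆ H, IsCover S Z'' ∧ membS S' Z'' ≤ k ∧
      (⋃₀ (Z'' : Set (Set (ℝ × ℝ))) = Set.univ ∨ RegularFam Z'') := by
  obtain ⟨Z, hZH, hZS, hZk⟩ := hex
  obtain ⟨Y, hYsub, hYirr, hYU⟩ := exists_irreducibleFam_subset_sUnion_eq (Z ∪ B)
  rw [Finset.coe_union, Set.sUnion_union] at hYU
  refine ⟨Y, hYsub.trans (Finset.union_subset hZH hBH), ?_, ?_, ?_⟩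
  · rw [isCover_iff_subset_sUnion, hYU]
    exact Set.subset_union_of_subset_left (isCover_iff_subset_sUnion.1 hZS) _
  · calc membS S' Y ≤ membS S' (Z ∪ B) := membS_mono_s10 hYsub
      _ = membS S' Z := membS_union_of_disjoint hBS'
      _ ≤ k := hZk
  · have hBY : ⋃₀ (B : Set (Set (ℝ × ℝ))) ⊆ ⋃₀ (Y : Set (Set (ℝ × ℝ))) :=
      hYU ▸ Set.subset_union_right
    exact hYirr.sUnion_eq_univ_or_regularFam (hB.subset (complementRegion_anti hBY))

theorem stmt10 (Δ : ℝ) (hΔ : 0 < Δ) (S S' : Finset (ℝ × ℝ))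
    (hS : ∀ p ∈ S, -Δ < p.1 ∧ p.1 < Δ ∧ -Δ < p.2 ∧ p.2 < Δ)
    (hS' : ∀ p ∈ S', -Δ < p.1 ∧ p.1 < Δ ∧ -Δ < p.2 ∧ p.2 < Δ)
    (k : ℕ) (H : Finset (Set (ℝ × ℝ))) (hhp : ∀ R ∈ H, IsHalfplane R)
    (hd1 : {p : ℝ × ℝ | p.2 ≤ -Δ} ∈ H) (hd2 : {p : ℝ × ℝ | Δ ≤ p.2} ∈ H)
    (hd3 : {p : ℝ × ℝ | p.1 ≤ -Δ} ∈ H) (hd4 : {p : ℝ × ℝ | Δ ≤ p.1} ∈ H)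
    (hex : ∃ Z ⊆ H, IsCover S Z ∧ membS S' Z ≤ k) :
    ∃ Z'' ⊆ H, IsCover S Z'' ∧ membS S' Z'' ≤ k ∧
      (⋃₀ (Z'' : Set (Set (ℝ × ℝ))) = Set.univ ∨ RegularFam Z'') :=
  stmt10_general S S' k H (boxSides Δ) (boxSides_subset_iff.2 ⟨hd1, hd2, hd3, hd4⟩)
    (disjoint_sUnion_boxSides_iff.2 hS') isBounded_complementRegion_boxSides hex
end

section
/- Let S and S' be finite sets of points in ℝ² and ℋ a finite family of halfplanes with S ⊆ ⋃ℋ and ⋃ℋ ≠ ℝ². Suppose 𝒵 ⊆ ℋ is a minimum-size set cover of S (i.e., |𝒵| ≤ |𝒵'| for every set cover 𝒵' ⊆ ℋ of S) that is 1-stable. Then for every set cover 𝒵' ⊆ ℋ of S and every point p ∈ S', memb(p, 𝒵) ≤ memb(p, 𝒵') + 2; consequently, memb(S', 𝒵) ≤ opt(S, S', ℋ) + 2. -/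
open scoped Classical

/-- `Z` is `k`-expandable in `H`: some `≤ k`-element swap strictly enlarges the union. -/
def Expandable (H : Finset (Set (ℝ × ℝ))) (k : ℕ) (Z : Finset (Set (ℝ × ℝ))) : Prop :=
  ∃ Z' ⊆ H, (Z \ Z').card = (Z' \ Z).card ∧ (Z' \ Z).card ≤ k ∧
    ⋃₀ (Z : Set (Set (ℝ × ℝ))) ⊂ ⋃₀ (Z' : Set (Set (ℝ × ℝ)))

/-- `Z` is `k`-stable in `H` if it is not `k`-expandable. -/
def Stable (H : Finset (Set (ℝ × ℝ))) (k : ℕ) (Z : Finset (Set (ℝ × ℝ))) : Prop :=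
  ¬ Expandable H k Z

/-!
Fix a point `o` outside every halfplane. The halfplanes missing `o` are exactly the sets
`{q | 1 ≤ φ (q - o)}` with `φ ≠ 0` a linear form, and in the plane the forms that are positive at
`p - o`, normalised to take the value `1` there, lie on a line. The two ends `A`, `B` of the members
of `Z` containing `p` are therefore extreme in every direction. If `J ∈ Z` contains `p`, `C ∈ H`
does not, and some `s ∈ J ∩ C` lies in neither `A` nor `B`, then the form of `A` or of `B` is
`a • ψ + b • χ` with `a, b ≥ 0` and `a + b < 1`, where `ψ`, `χ` are the forms of `J` and `C`. Then
exchanging that member for `C` enlarges the union, a contradiction to stability. So `J ∩ C ⊆ A ∪ B`,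
and replacing all members of `Z` through `p` by `A`, `B` and the members of `Z'` through `p` gives
another cover, which cannot be smaller than `Z`.
-/

section LinearForms

variable {𝕜 E : Type*} [Field 𝕜] [AddCommGroup E] [Module 𝕜 E]

theorem exists_smul_add_smul_eq (hE : Module.finrank 𝕜 E = 2) {p w : E}
    (hpw : LinearIndependent 𝕜 ![p, w]) (s : E) : ∃ α β : 𝕜, α • p + β • w = s := by
  have hspan := hpw.span_eq_top_of_card_eq_finrank (by rw [Fintype.card_fin, hE])
  rw [Matrix.range_cons_cons_empty] at hspan
  exact Submodule.mem_span_pair.1 (hspan ▸ Submodule.mem_top)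

theorem linearIndependent_pair_of_det_ne_zero {ψ χ : Module.Dual 𝕜 E} {p s : E}
    (h : ψ p * χ s - χ p * ψ s ≠ 0) : LinearIndependent 𝕜 ![p, s] := by
  refine LinearIndependent.pair_iff.2 fun α β hαβ ↦ ?_
  have hψ : α * ψ p + β * ψ s = 0 := by simpa using congrArg ψ hαβ
  have hχ : α * χ p + β * χ s = 0 := by simpa using congrArg χ hαβ
  constructor
  · refine (mul_eq_zero.1 ?_).resolve_right h
    linear_combination χ s * hψ - ψ s * hχ
  · refine (mul_eq_zero.1 ?_).resolve_right h
    linear_combination ψ p * hχ - χ p * hψ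

theorem eq_smul_add_smul_of_det_ne_zero (hE : Module.finrank 𝕜 E = 2) (φ : Module.Dual 𝕜 E)
    {ψ χ : Module.Dual 𝕜 E} {p s : E} (h : ψ p * χ s - χ p * ψ s ≠ 0) :
    φ = ((φ p * χ s - χ p * φ s) / (ψ p * χ s - χ p * ψ s)) • ψ +
      ((ψ p * φ s - φ p * ψ s) / (ψ p * χ s - χ p * ψ s)) • χ := by
  ext q
  obtain ⟨α, β, rfl⟩ := exists_smul_add_smul_eq hE (linearIndependent_pair_of_det_ne_zero h) q
  generalize hd : ψ p * χ s - χ p * ψ s = d at h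
  simp only [map_add, map_smul, LinearMap.add_apply, LinearMap.smul_apply, smul_eq_mul]
  field_simp
  rw [← hd]
  ring

variable [LinearOrder 𝕜]

/-- The halfspace of points on which the linear form `φ`, based at `o`, is at least `1`. Every
halfspace missing `o` is of this kind, so that once `o` is fixed it is encoded by `φ` alone. -/
def dualHalfspace (o : E) (φ : Module.Dual 𝕜 E) : Set E :=
  {q | 1 ≤ φ (q - o)}

theorem mem_dualHalfspace {o q : E} {φ : Module.Dual 𝕜 E} :
    q ∈ dualHalfspace o φ ↔ 1 ≤ φ (q - o) :=
  Iff.rfl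

theorem notMem_dualHalfspace {o q : E} {φ : Module.Dual 𝕜 E} :
    q ∉ dualHalfspace o φ ↔ φ (q - o) < 1 :=
  not_le

variable [IsStrictOrderedRing 𝕜]

theorem mem_range_dualHalfspace {o : E} {φ : Module.Dual 𝕜 E} {c : 𝕜} (ho : o ∉ {q | c ≤ φ q}) :
    {q | c ≤ φ q} ∈ Set.range (dualHalfspace (𝕜 := 𝕜) o) := by
  have hc : 0 < c - φ o := sub_pos.2 (not_le.1 ho)
  refine ⟨(c - φ o)⁻¹ • φ, Set.ext fun q ↦ ?_⟩
  rw [mem_dualHalfspace, LinearMap.smul_apply, smul_eq_mul, inv_mul_eq_div, one_le_div hc, map_sub,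
    sub_le_sub_iff_right, Set.mem_ofPred_eq]

/-- Such an `r` is where the ray from `o` through `q` enters `dualHalfspace o χ`. -/
theorem exists_mem_dualHalfspace_forall_notMem {o q : E} {χ : Module.Dual 𝕜 E}
    (hχ : 0 < χ (q - o)) :
    ∃ r ∈ dualHalfspace o χ,
      ∀ φ : Module.Dual 𝕜 E, φ (q - o) < χ (q - o) → r ∉ dualHalfspace o φ := by
  have apply_sub (φ : Module.Dual 𝕜 E) :
      φ (o + (χ (q - o))⁻¹ • (q - o) - o) = φ (q - o) / χ (q - o) := by
    rw [add_sub_cancel_left, map_smul, smul_eq_mul, inv_mul_eq_div]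
  refine ⟨o + (χ (q - o))⁻¹ • (q - o), ?_, fun φ hφ ↦ ?_⟩
  · rw [mem_dualHalfspace, apply_sub, div_self hχ.ne']
  · rwa [notMem_dualHalfspace, apply_sub, div_lt_one hχ]

theorem dualHalfspace_smul_add_smul_subset (o : E) (ψ χ : Module.Dual 𝕜 E) {a b : 𝕜} (ha : 0 ≤ a)
    (hb : 0 ≤ b) (hab : a + b < 1) :
    dualHalfspace o (a • ψ + b • χ) ⊆ dualHalfspace o ψ ∪ dualHalfspace o χ := by
  intro q hq
  by_contra hmem
  obtain ⟨hψ, hχ⟩ := not_or.1 hmem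
  have hcomb : (a • ψ + b • χ) (q - o) ≤ a * 1 + b * 1 :=
    add_le_add (mul_le_mul_of_nonneg_left (notMem_dualHalfspace.1 hψ).le ha)
      (mul_le_mul_of_nonneg_left (notMem_dualHalfspace.1 hχ).le hb)
  linarith [mem_dualHalfspace.1 hq]

theorem subconvex_combo_lt_right {a b y z : 𝕜} (ha : 0 ≤ a) (hb : 0 ≤ b) (hab : a + b < 1)
    (hpos : 0 < a * y + b * z) (hy : y < a * y + b * z) : a * y + b * z < z := by
  by_contra! hz
  have hay := mul_le_mul_of_nonneg_left hy.le ha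
  have hbz := mul_le_mul_of_nonneg_left hz hb
  have hlt := mul_lt_mul_of_pos_right hab hpos
  linarith

theorem exists_subset_card_le_two_forall_div_le (hE : Module.finrank 𝕜 E = 2) {ι : Type*}
    (t : Finset ι) (f : ι → Module.Dual 𝕜 E) {p : E} (hp : ∀ i ∈ t, 0 < f i p) :
    ∃ u ⊆ t, u.card ≤ 2 ∧ ∀ s, ∀ i ∈ t, ∃ m ∈ u, f i s / f i p ≤ f m s / f m p := by
  obtain rfl | ht := t.eq_empty_or_nonempty
  · exact ⟨∅, Finset.empty_subset _, Nat.zero_le _, fun s i hi ↦ absurd hi (Finset.notMem_empty i)⟩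
  have hp0 : p ≠ 0 := by
    rintro rfl
    obtain ⟨i, hi⟩ := ht
    exact (hp i hi).ne' (map_zero _)
  obtain ⟨w, hw⟩ := exists_linearIndependent_pair_of_one_lt_finrank (hE ▸ one_lt_two) hp0
  have div_eq (α β : 𝕜) {i : ι} (hi : i ∈ t) :
      f i (α • p + β • w) / f i p = α + β * (f i w / f i p) := by
    have := (hp i hi).ne'
    simp only [map_add, map_smul, smul_eq_mul]
    field_simp
  obtain ⟨a, hat, hmin⟩ := t.exists_min_image (fun i ↦ f i w / f i p) ht
  obtain ⟨b, hbt, hmax⟩ := t.exists_max_image (fun i ↦ f i w / f i p) ht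
  refine ⟨{a, b}, by simp [Finset.insert_subset_iff, hat, hbt], Finset.card_le_two, fun s i hi ↦ ?_⟩
  obtain ⟨α, β, rfl⟩ := exists_smul_add_smul_eq hE hw s
  rcases le_total 0 β with hβ | hβ
  · refine ⟨b, by simp, ?_⟩
    rw [div_eq α β hi, div_eq α β hbt]
    exact add_le_add_right (mul_le_mul_of_nonneg_left (hmax i hi) hβ) α
  · refine ⟨a, by simp, ?_⟩
    rw [div_eq α β hi, div_eq α β hat]
    exact add_le_add_right (mul_le_mul_of_nonpos_left (hmin i hi) hβ) α

theorem exists_eq_smul_add_smul_of_div_le (hE : Module.finrank 𝕜 E = 2) {φ ψ χ : Module.Dual 𝕜 E}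
    {p s : E} (hφp : 1 ≤ φ p) (hφs : φ s < 1) (hψp : 1 ≤ ψ p) (hψs : 1 ≤ ψ s) (hχp : χ p < 1)
    (hχs : 1 ≤ χ s) (h : ψ s / ψ p ≤ φ s / φ p) :
    ∃ a b : 𝕜, 0 ≤ a ∧ 0 ≤ b ∧ a + b < 1 ∧ φ = a • ψ + b • χ := by
  have hψp₀ : 0 < ψ p := by linarith
  have hφp₀ : 0 < φ p := by linarith
  have hcross : ψ s * φ p ≤ φ s * ψ p := (div_le_div_iff₀ hψp₀ hφp₀).1 h
  have hφs₀ : 0 < φ s :=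
    pos_of_mul_pos_left ((mul_pos (by linarith) hφp₀).trans_le hcross) hψp₀.le
  have hlt : ψ s < ψ p := by
    have : φ s / φ p < 1 := (div_lt_one hφp₀).2 (by linarith)
    exact (div_lt_one hψp₀).1 (h.trans_lt this)
  have hdet : 0 < ψ p * χ s - χ p * ψ s := sub_pos.2 <|
    calc χ p * ψ s < ψ s := mul_lt_of_lt_one_left (by linarith) hχp
      _ < ψ p := hlt
      _ ≤ ψ p * χ s := le_mul_of_one_le_right hψp₀.le hχs
  have hnum : 0 < φ p * χ s - χ p * φ s := sub_pos.2 <|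
    calc χ p * φ s < φ s := mul_lt_of_lt_one_left hφs₀ hχp
      _ < φ p := by linarith
      _ ≤ φ p * χ s := le_mul_of_one_le_right hφp₀.le hχs
  have hφ := eq_smul_add_smul_of_det_ne_zero hE φ hdet.ne'
  set a := (φ p * χ s - χ p * φ s) / (ψ p * χ s - χ p * ψ s)
  set b := (ψ p * φ s - φ p * ψ s) / (ψ p * χ s - χ p * ψ s)
  have ha : 0 ≤ a := (div_pos hnum hdet).le
  have hb : 0 ≤ b := div_nonneg (by linarith) hdet.le
  refine ⟨a, b, ha, hb, ?_, hφ⟩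
  calc a + b ≤ a * ψ s + b * χ s :=
        add_le_add (le_mul_of_one_le_right ha hψs) (le_mul_of_one_le_right hb hχs)
    _ = φ s := (LinearMap.congr_fun hφ s).symm
    _ < 1 := hφs

end LinearForms

/-- `Z` is a set cover of `S` by members of `H`, of minimum cardinality, and no exchange of a single
member of `Z` for a member of `H` strictly enlarges its union. Unlike in `IsCover` and `Stable`, the
set `S` and the family `H` may be infinite. -/
structure IsStableMinCover {α : Type*} (S : Set α) (H : Set (Set α)) (Z : Finset (Set α)) :
    Prop where
  subset : (Z : Set (Set α)) ⊆ H
  cover : S ⊆ ⋃₀ Z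
  card_le : ∀ Z' : Finset (Set α), (Z' : Set (Set α)) ⊆ H → S ⊆ ⋃₀ Z' → Z.card ≤ Z'.card
  not_ssubset : ∀ A ∈ Z, ∀ C ∈ H,
    ¬ ⋃₀ (Z : Set (Set α)) ⊂ ⋃₀ (insert C (Z.erase A) : Finset (Set α))

namespace IsStableMinCover

section Exchange

variable {α : Type*} {S : Set α} {H : Set (Set α)} {Z : Finset (Set α)} {A B C : Set α}

theorem exists_mem_forall_eq (h : IsStableMinCover S H Z) (hA : A ∈ Z) :
    ∃ q ∈ A, ∀ T ∈ Z, q ∈ T → T = A := by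
  have hcov : ¬ S ⊆ ⋃₀ (Z.erase A : Finset (Set α)) := fun hcov ↦
    (Finset.card_erase_lt_of_mem hA).not_ge <|
      h.card_le _ ((Finset.coe_subset.2 (Z.erase_subset A)).trans h.subset) hcov
  obtain ⟨q, hqS, hq⟩ := Set.not_subset.1 hcov
  have huniq : ∀ T ∈ Z, q ∈ T → T = A := fun T hT hqT ↦ by
    by_contra hTA
    exact hq ⟨T, Finset.mem_erase.2 ⟨hTA, hT⟩, hqT⟩
  obtain ⟨T, hT, hqT⟩ := h.cover hqS
  exact ⟨q, huniq T hT hqT ▸ hqT, huniq⟩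

theorem subset_sUnion (h : IsStableMinCover S H Z) (hA : A ∈ Z) (hB : B ∈ Z) (hBA : B ≠ A)
    (hC : C ∈ H) (hABC : A ⊆ B ∪ C) : C ⊆ ⋃₀ (Z : Set (Set α)) := by
  have hZ : ⋃₀ (Z : Set (Set α)) ⊆ ⋃₀ (insert C (Z.erase A) : Finset (Set α)) := by
    rintro q ⟨T, hT, hqT⟩
    by_cases hTA : T = A
    · rcases hABC (hTA ▸ hqT) with hqB | hqC
      · exact ⟨B, Finset.mem_insert_of_mem (Finset.mem_erase.2 ⟨hBA, hB⟩), hqB⟩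
      · exact ⟨C, Finset.mem_insert_self _ _, hqC⟩
    · exact ⟨T, Finset.mem_insert_of_mem (Finset.mem_erase.2 ⟨hTA, hT⟩), hqT⟩
  have hCsub : C ⊆ ⋃₀ (insert C (Z.erase A) : Finset (Set α)) :=
    Set.subset_sUnion_of_mem (Finset.mem_insert_self C (Z.erase A))
  exact hCsub.trans (not_not.1 fun hnot ↦ h.not_ssubset A hA C hC ⟨hZ, hnot⟩)

theorem card_filter_le (h : IsStableMinCover S H Z) {P : Set α → Prop} {T Z' : Finset (Set α)}
    (hTZ : T ⊆ Z) (hZ' : (Z' : Set (Set α)) ⊆ H) (hcov' : S ⊆ ⋃₀ Z')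
    (hT : ∀ J ∈ Z, P J → ∀ C ∈ Z', ¬ P C → J ∩ C ⊆ ⋃₀ T) :
    (Z.filter P).card ≤ (Z'.filter P).card + T.card := by
  set Z₁ := Z.filter (¬ P ·) ∪ (Z'.filter P ∪ T)
  have hsub : (Z₁ : Set (Set α)) ⊆ H := by
    intro R hR
    simp only [Z₁, Finset.mem_coe, Finset.mem_union, Finset.mem_filter] at hR
    rcases hR with hR | hR | hR
    · exact h.subset hR.1
    · exact hZ' hR.1
    · exact h.subset (hTZ hR)
  have hcov : S ⊆ ⋃₀ Z₁ := by
    intro s hs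
    obtain ⟨J, hJ, hsJ⟩ := h.cover hs
    obtain ⟨C, hC, hsC⟩ := hcov' hs
    by_cases hPJ : P J
    · by_cases hPC : P C
      · exact ⟨C, by simp_all [Z₁], hsC⟩
      · obtain ⟨R, hR, hsR⟩ := hT J hJ hPJ C hC hPC ⟨hsJ, hsC⟩
        exact ⟨R, by simp_all [Z₁], hsR⟩
    · exact ⟨J, by simp_all [Z₁], hsJ⟩
  have hle : Z.card ≤ (Z.filter (¬ P ·)).card + ((Z'.filter P).card + T.card) :=
    (h.card_le Z₁ hsub hcov).trans <| (Finset.card_union_le _ _).trans <|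
      Nat.add_le_add_left (Finset.card_union_le _ _) _
  have hsplit := Z.card_filter_add_card_filter_not P
  omega

end Exchange

section Plane

variable {𝕜 E : Type*} [Field 𝕜] [LinearOrder 𝕜] [IsStrictOrderedRing 𝕜] [AddCommGroup E]
  [Module 𝕜 E] {S : Set E} {H : Set (Set E)} {Z : Finset (Set E)} {o : E}

theorem one_le_add_of_dualHalfspace_mem (h : IsStableMinCover S H Z)
    (hH : H ⊆ Set.range (dualHalfspace (𝕜 := 𝕜) o)) {ψ χ : Module.Dual 𝕜 E} {a b : 𝕜} (ha : 0 ≤ a)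
    (hb : 0 ≤ b) (hA : dualHalfspace o (a • ψ + b • χ) ∈ Z) (hB : dualHalfspace o ψ ∈ Z)
    (hBA : dualHalfspace o ψ ≠ dualHalfspace o (a • ψ + b • χ)) (hC : dualHalfspace o χ ∈ H) :
    1 ≤ a + b := by
  by_contra! hab
  obtain ⟨q, hqA, hq⟩ := h.exists_mem_forall_eq hA
  have hqA₁ : 1 ≤ a * ψ (q - o) + b * χ (q - o) := hqA
  have hqB : ψ (q - o) < 1 := notMem_dualHalfspace.1 fun hqB ↦ hBA (hq _ hB hqB)
  have hqC : a * ψ (q - o) + b * χ (q - o) < χ (q - o) :=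
    subconvex_combo_lt_right ha hb hab (by linarith) (by linarith)
  obtain ⟨r, hrC, hr⟩ := exists_mem_dualHalfspace_forall_notMem (𝕜 := 𝕜) (χ := χ) (o := o) (q := q)
    (by linarith)
  obtain ⟨T, hT, hrT⟩ := h.subset_sUnion hA hB hBA hC
    (dualHalfspace_smul_add_smul_subset o ψ χ ha hb hab) hrC
  obtain ⟨θ, rfl⟩ := hH (h.subset hT)
  refine hr θ ?_ hrT
  by_cases hqT : q ∈ dualHalfspace o θ
  · rw [hq _ hT hqT] at hrT
    exact absurd hrT (hr _ hqC)
  · linarith [notMem_dualHalfspace.1 hqT]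

theorem exists_card_le_two_inter_subset_sUnion (hE : Module.finrank 𝕜 E = 2)
    (h : IsStableMinCover S H Z) (hH : H ⊆ Set.range (dualHalfspace (𝕜 := 𝕜) o)) (p : E) :
    ∃ T ⊆ Z, T.card ≤ 2 ∧ ∀ J ∈ Z, p ∈ J → ∀ C ∈ H, p ∉ C → J ∩ C ⊆ ⋃₀ T := by
  choose! f hf using fun R (hR : R ∈ H) ↦ hH hR
  have mem_iff {R : Set E} (hR : R ∈ H) (q : E) : q ∈ R ↔ 1 ≤ f R (q - o) := by
    rw [← mem_dualHalfspace, hf R hR]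
  have notMem_iff {R : Set E} (hR : R ∈ H) (q : E) : q ∉ R ↔ f R (q - o) < 1 := by
    rw [mem_iff hR, not_le]
  obtain ⟨T, hTZ, hTcard, hT⟩ :=
    exists_subset_card_le_two_forall_div_le hE (Z.filter (p ∈ ·)) f (p := p - o) fun R hR ↦ by
      obtain ⟨hRZ, hpR⟩ := Finset.mem_filter.1 hR
      exact zero_lt_one.trans_le ((mem_iff (h.subset hRZ) p).1 hpR)
  refine ⟨T, hTZ.trans (Z.filter_subset _), hTcard, fun J hJ hpJ C hC hpC s ⟨hsJ, hsC⟩ ↦ ?_⟩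
  obtain ⟨M, hMT, hJM⟩ := hT (s - o) J (Finset.mem_filter.2 ⟨hJ, hpJ⟩)
  obtain ⟨hM, hpM⟩ := Finset.mem_filter.1 (hTZ hMT)
  have hJH := h.subset hJ
  have hMH := h.subset hM
  by_contra hs
  have hsM : s ∉ M := fun hsM ↦ hs ⟨M, hMT, hsM⟩
  obtain ⟨a, b, ha, hb, hab, hfM⟩ := exists_eq_smul_add_smul_of_div_le hE
    ((mem_iff hMH p).1 hpM) ((notMem_iff hMH s).1 hsM) ((mem_iff hJH p).1 hpJ)
    ((mem_iff hJH s).1 hsJ) ((notMem_iff hC p).1 hpC) ((mem_iff hC s).1 hsC) hJM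
  have hMeq : dualHalfspace o (a • f J + b • f C) = M := hfM ▸ hf M hMH
  have hJneM : J ≠ M := fun hJM ↦ hsM (hJM ▸ hsJ)
  refine hab.not_ge (h.one_le_add_of_dualHalfspace_mem hH ha hb (ψ := f J) (χ := f C) ?_ ?_ ?_ ?_)
  · rwa [hMeq]
  · rwa [hf J hJH]
  · rwa [hMeq, hf J hJH]
  · rwa [hf C hC]

end Plane

end IsStableMinCover

theorem stmt13_general {𝕜 E : Type*} [Field 𝕜] [LinearOrder 𝕜] [IsStrictOrderedRing 𝕜]
    [AddCommGroup E] [Module 𝕜 E] (hE : Module.finrank 𝕜 E = 2) {S : Set E} {H : Set (Set E)}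
    (hH : ∀ R ∈ H, ∃ φ : Module.Dual 𝕜 E, ∃ c : 𝕜, R = {q | c ≤ φ q}) (hne : ⋃₀ H ≠ Set.univ)
    {Z : Finset (Set E)} (hZ : IsStableMinCover S H Z) {Z' : Finset (Set E)}
    (hZ' : (Z' : Set (Set E)) ⊆ H) (hcov' : S ⊆ ⋃₀ Z') (p : E) :
    (Z.filter (p ∈ ·)).card ≤ (Z'.filter (p ∈ ·)).card + 2 := by
  obtain ⟨o, ho⟩ := (Set.ne_univ_iff_exists_notMem _).1 hne
  have hrange : H ⊆ Set.range (dualHalfspace (𝕜 := 𝕜) o) := by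
    intro R hR
    obtain ⟨φ, c, rfl⟩ := hH R hR
    exact mem_range_dualHalfspace fun hoR ↦ ho ⟨_, hR, hoR⟩
  obtain ⟨T, hTZ, hTcard, hT⟩ := hZ.exists_card_le_two_inter_subset_sUnion hE hrange p
  have hle := hZ.card_filter_le hTZ hZ' hcov' fun J hJ hpJ C hC ↦ hT J hJ hpJ C (hZ' hC)
  omega

theorem IsHalfplane.exists_dual {R : Set (ℝ × ℝ)} (hR : IsHalfplane R) :
    ∃ φ : Module.Dual ℝ (ℝ × ℝ), ∃ c : ℝ, R = {q | c ≤ φ q} := by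
  obtain ⟨v, c, -, rfl⟩ := hR
  exact ⟨v.1 • LinearMap.fst ℝ ℝ ℝ + v.2 • LinearMap.snd ℝ ℝ ℝ, c, rfl⟩

theorem Stable.not_ssubset_insert_erase {H Z : Finset (Set (ℝ × ℝ))} (h : Stable H 1 Z)
    (hZ : Z ⊆ H) {A C : Set (ℝ × ℝ)} (hA : A ∈ Z) (hC : C ∈ H) :
    ¬ ⋃₀ (Z : Set (Set (ℝ × ℝ))) ⊂ ⋃₀ (insert C (Z.erase A) : Finset (Set (ℝ × ℝ))) := by
  intro hlt
  have hCZ : C ∉ Z := fun hCZ ↦ hlt.not_subset <| Set.sUnion_subset_sUnion <|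
    Finset.coe_subset.2 (Finset.insert_subset hCZ (Z.erase_subset A))
  have hAC : A ≠ C := fun hAC ↦ hCZ (hAC ▸ hA)
  have hout : Z \ insert C (Z.erase A) = {A} := by
    grind
  have hin : insert C (Z.erase A) \ Z = {C} := by
    grind
  have hsub : insert C (Z.erase A) ⊆ H :=
    Finset.insert_subset hC ((Z.erase_subset A).trans hZ)
  refine h ⟨insert C (Z.erase A), hsub, ?_, ?_, hlt⟩
  · rw [hout, hin, Finset.card_singleton, Finset.card_singleton]
  · rw [hin, Finset.card_singleton]

theorem Stable.isStableMinCover {S : Finset (ℝ × ℝ)} {H Z : Finset (Set (ℝ × ℝ))}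
    (h : Stable H 1 Z) (hZ : Z ⊆ H) (hcov : IsCover S Z)
    (hmin : ∀ Z' ⊆ H, IsCover S Z' → Z.card ≤ Z'.card) :
    IsStableMinCover (S : Set (ℝ × ℝ)) H Z where
  subset := hZ
  cover := hcov
  card_le := hmin
  not_ssubset _ hA _ hC := h.not_ssubset_insert_erase hZ hA hC

theorem membS_le_optMemb_add {S S' : Finset (ℝ × ℝ)} {H Z : Finset (Set (ℝ × ℝ))} {k : ℕ}
    (hH : IsCover S H)
    (h : ∀ Z' ⊆ H, IsCover S Z' → ∀ p ∈ S', memb p Z ≤ memb p Z' + k) :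
    membS S' Z ≤ optMemb S S' H + k := by
  obtain ⟨G, hG, hGS, hopt⟩ : optMemb S S' H ∈ {m | ∃ G ⊆ H, IsCover S G ∧ membS S' G = m} :=
    Nat.sInf_mem ⟨_, H, Finset.Subset.refl H, hH, rfl⟩
  rw [← hopt]
  refine Finset.sup_le fun p hp ↦ (h G hG hGS p hp).trans ?_
  exact Nat.add_le_add_right (Finset.le_sup (f := fun p ↦ memb p G) hp) k

theorem stmt13 (S S' : Finset (ℝ × ℝ)) (H : Finset (Set (ℝ × ℝ)))
    (hhp : ∀ R ∈ H, IsHalfplane R) (hcov : IsCover S H)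
    (hne : ⋃₀ (H : Set (Set (ℝ × ℝ))) ≠ Set.univ)
    (Z : Finset (Set (ℝ × ℝ))) (hZsub : Z ⊆ H) (hZcov : IsCover S Z)
    (hZmin : ∀ Z' ⊆ H, IsCover S Z' → Z.card ≤ Z'.card)
    (hZstable : Stable H 1 Z) :
    (∀ Z' ⊆ H, IsCover S Z' → ∀ p ∈ S', memb p Z ≤ memb p Z' + 2) ∧
      membS S' Z ≤ optMemb S S' H + 2 := by
  have hbound : ∀ Z' ⊆ H, IsCover S Z' → ∀ p ∈ S', memb p Z ≤ memb p Z' + 2 :=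
    fun Z' hZ' hcov' p _ ↦ stmt13_general (𝕜 := ℝ) (by simp) (fun R hR ↦ (hhp R hR).exists_dual) hne
      (hZstable.isStableMinCover hZsub hZcov hZmin) hZ' hcov' p
  exact ⟨hbound, membS_le_optMemb_add hcov hbound⟩
end
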